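/- arXiv:2406.00292 — 3 statements merged into one kernel-verified Lean document; each statement's English description precedes it below -/
import Mathlib

section
/- Let G be a graph that has a perfect matching. An edge e of G is admissible (i.e., contained in some perfect matching of G) if and only if G has no barrier containing both ends of e. -/
open SimpleGraph Set

universe u
variable {V : Type u}

/-- Number of odd components of a graph. -/
noncomputable def oddComps (G : SimpleGraph V) : ℕ :=
  Nat.card {c : G.ConnectedComponent // Odd (Nat.card c.supp)}

/-- `S` is a barrier of `G`: the number of odd components of `G − S` equals `|S|`. -/
def IsBarrier (G : SimpleGraph V) (S : Set V) : Prop :=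
  oddComps (G.induce Sᶜ) = S.ncard

/-- `G` has a perfect matching. -/
def HasPM (G : SimpleGraph V) : Prop :=
  ∃ M : Subgraph G, M.IsPerfectMatching

/-- `G` is matching covered. -/
def MatchingCovered (G : SimpleGraph V) : Prop :=
  G.Connected ∧ G.edgeSet.Nonempty ∧
    ∀ e ∈ G.edgeSet, ∃ M : Subgraph G, M.IsPerfectMatching ∧ e ∈ M.edgeSet

/-- An edge `e` of a matching covered graph `G` is removable. -/
def Removable (G : SimpleGraph V) (e : Sym2 V) : Prop :=
  e ∈ G.edgeSet ∧ MatchingCovered (G.deleteEdges {e})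

/-- `G` is 3-connected. -/
def ThreeConnected (G : SimpleGraph V) : Prop :=
  4 ≤ Nat.card V ∧ ∀ S : Set V, S.ncard ≤ 2 → (G.induce Sᶜ).Connected

/-- A brick. -/
def IsBrick (G : SimpleGraph V) : Prop :=
  ThreeConnected G ∧ ∀ x y : V, x ≠ y → HasPM (G.induce ({x, y} : Set V)ᶜ)

/-- neighbours outside `S` of vertices of `S`. -/
def Nbrs (G : SimpleGraph V) (S : Set V) : Set V :=
  {v | v ∉ S ∧ ∃ u ∈ S, G.Adj u v}

/-- factor-critical graph. -/
def FactorCritical (G : SimpleGraph V) : Prop :=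
  ∀ v : V, HasPM (G.induce ({v} : Set V)ᶜ)

/-- `(U, W)` is a bipartition of `G`. -/
def IsBipartition (G : SimpleGraph V) (U W : Set V) : Prop :=
  Disjoint U W ∧ U ∪ W = Set.univ ∧
    ∀ a b : V, G.Adj a b → (a ∈ U ∧ b ∈ W) ∨ (a ∈ W ∧ b ∈ U)

/-- Isomorphic graphs have the same number of odd components. -/
lemma oddComps_congr {W : Type*} {G : SimpleGraph V} {H : SimpleGraph W} (φ : G ≃g H) :
    oddComps G = oddComps H :=
  Nat.card_congr <| φ.connectedComponentEquiv.subtypeEquiv fun c ↦ by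
    rw [Nat.card_congr (ConnectedComponent.isoEquivSupp φ c)]

/-- Deleting `S` as a subgraph operation agrees with inducing on the complement of `S`. -/
def deleteVertsIsoInduceCompl (G : SimpleGraph V) (S : Set V) :
    ((⊤ : G.Subgraph).deleteVerts S).coe ≃g G.induce Sᶜ where
  toEquiv := Equiv.subtypeEquivRight fun v ↦ by simp
  map_rel_iff' {a b} := by
    have ha := a.2
    have hb := b.2
    simp_all

lemma ncard_oddComponents_deleteVerts (G : SimpleGraph V) (S : Set V) :
    ((⊤ : G.Subgraph).deleteVerts S).coe.oddComponents.ncard = oddComps (G.induce Sᶜ) :=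
  oddComps_congr (deleteVertsIsoInduceCompl G S)

lemma isTutteViolator_iff (G : SimpleGraph V) (S : Set V) :
    G.IsTutteViolator S ↔ S.ncard < oddComps (G.induce Sᶜ) := by
  rw [IsTutteViolator, ncard_oddComponents_deleteVerts]

/-- Deleting `T` and then `U` amounts to deleting `U ∪ T`. -/
def induceComplUnionIso (G : SimpleGraph V) (T : Set V) (U : Set (Tᶜ : Set V)) :
    G.induce (Subtype.val '' U ∪ T)ᶜ ≃g (G.induce Tᶜ).induce Uᶜ where
  toFun v := ⟨⟨v, fun h ↦ v.2 (.inr h)⟩, fun h ↦ v.2 (.inl ⟨_, h, rfl⟩)⟩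
  invFun v := ⟨v, by
    rintro (⟨w, hw, h⟩ | h)
    · exact v.2 (Subtype.ext h ▸ hw)
    · exact v.1.2 h⟩
  left_inv _ := rfl
  right_inv _ := rfl
  map_rel_iff' := Iff.rfl

/-- A perfect matching of `G - {x, y}` extends along the edge `xy` to one of `G`. -/
lemma exists_isPerfectMatching_of_induce_compl_pair {G : SimpleGraph V} {x y : V}
    (hxy : G.Adj x y) (h : HasPM (G.induce ({x, y} : Set V)ᶜ)) :
    ∃ M : Subgraph G, M.IsPerfectMatching ∧ s(x, y) ∈ M.edgeSet := by
  obtain ⟨N, hN, hNspan⟩ := h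
  have hN' := hN.map (Embedding.induce (G := G) ({x, y} : Set V)ᶜ).toHom Subtype.val_injective
  have hE := Subgraph.IsMatching.subgraphOfAdj hxy
  refine ⟨_, ⟨hN'.sup hE ?_, fun v ↦ ?_⟩, .inr rfl⟩
  · rw [hN'.support_eq_verts, hE.support_eq_verts, Set.disjoint_left]
    rintro _ ⟨w, -, rfl⟩ hw
    exact w.2 hw
  · by_cases hv : v ∈ ({x, y} : Set V)
    · exact .inr hv
    · exact .inl ⟨⟨v, hv⟩, hNspan _, rfl⟩

/-- Every vertex of a barrier is matched to a vertex outside it by each perfect matching. -/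
lemma IsBarrier.exists_adj_notMem [Finite V] {G : SimpleGraph V} {B : Set V} (hB : IsBarrier G B)
    {M : Subgraph G} (hM : M.IsPerfectMatching) {x : V} (hx : x ∈ B) :
    ∃ v ∉ B, M.Adj x v := by
  choose f hf g hgf hg using ConnectedComponent.odd_matches_node_outside hM (u := B)
  have hinj : (fun c ↦ (⟨f c, hf c⟩ : B)).Injective := fun c d hcd ↦ by
    have hfcd : f c = f d := congrArg Subtype.val hcd
    have hgcd : g c = g d :=
      Subtype.val_injective <| hM.1.eq_of_adj_right (hgf c) (hfcd ▸ hgf d)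
    exact Subtype.val_injective <| ConnectedComponent.eq_of_common_vertex (hg c) (hgcd ▸ hg d)
  have hcard : Nat.card B ≤
      Nat.card ((⊤ : G.Subgraph).deleteVerts B).coe.oddComponents := by
    rw [Nat.card_coe_set_eq, Nat.card_coe_set_eq, ncard_oddComponents_deleteVerts, hB]
  obtain ⟨c, hc⟩ := (hinj.bijective_of_nat_card_le hcard).2 ⟨x, hx⟩
  have hfc : f c = x := congrArg Subtype.val hc
  exact ⟨g c, (g c).2.2, hfc ▸ (hgf c).symm⟩

lemma odd_oddComps_iff [Finite V] (G : SimpleGraph V) : Odd (oddComps G) ↔ Odd (Nat.card V) :=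
  G.odd_ncard_oddComponents

/-- an edge is admissible iff no barrier contains both its ends. -/
theorem stmt2 [Fintype V] (G : SimpleGraph V) (hpm : HasPM G)
    (x y : V) (hxy : G.Adj x y) :
    (∃ M : Subgraph G, M.IsPerfectMatching ∧ s(x, y) ∈ M.edgeSet) ↔
      ¬ ∃ B : Set V, IsBarrier G B ∧ x ∈ B ∧ y ∈ B := by
  constructor
  · rintro ⟨M, hM, hMxy⟩ ⟨B, hB, hx, hy⟩
    obtain ⟨v, hv, hxv⟩ := hB.exists_adj_notMem hM hx
    exact hv (hM.1.eq_of_adj_left hMxy hxv ▸ hy)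
  · intro hB
    by_contra hno
    have hnoPM := mt (exists_isPerfectMatching_of_induce_compl_pair hxy) hno
    simp only [HasPM, tutte, not_forall, not_not] at hnoPM
    obtain ⟨U, hU⟩ := hnoPM
    rw [isTutteViolator_iff, ← oddComps_congr (induceComplUnionIso G {x, y} U)] at hU
    refine hB ⟨Subtype.val '' U ∪ {x, y}, ?_, by simp, by simp⟩
    obtain ⟨M, hM⟩ := hpm
    have hle := not_isTutteViolator_of_isPerfectMatching hM (Subtype.val '' U ∪ {x, y})
    rw [isTutteViolator_iff, not_lt] at hle
    have hcard : (Subtype.val '' U ∪ {x, y}).ncard = U.ncard + 2 := by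
      rw [Set.ncard_union_eq, Set.ncard_image_of_injective _ Subtype.val_injective,
        Set.ncard_pair hxy.ne]
      rw [Set.disjoint_left]
      rintro _ ⟨w, -, rfl⟩ hw
      exact w.2 hw
    have hpar := odd_oddComps_iff (G.induce (Subtype.val '' U ∪ {x, y})ᶜ)
    have heven := hM.even_card
    have hadd := Set.ncard_add_ncard_compl (Subtype.val '' U ∪ {x, y})
    rw [Nat.card_eq_fintype_card] at hadd
    rw [Nat.card_coe_set_eq] at hpar
    rw [IsBarrier]
    grind
end

section
/- Let G be a near-bipartite brick with removable doubleton {e1, e2}, and let H = G − {e1, e2}. Then every vertex of G is incident with at most two edges that are nonremovable in both G and H. -/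
open SimpleGraph Set

universe u
variable {V : Type u}

/-- A perfect matching that sends every vertex of `A` into `B` witnesses `|A| ≤ |B|`. -/
lemma SimpleGraph.Subgraph.IsPerfectMatching.ncard_le {X : Type*} [Finite X] {G : SimpleGraph X}
    {M : Subgraph G} (hM : M.IsPerfectMatching) {A B : Set X}
    (h : ∀ a ∈ A, ∀ b, M.Adj a b → b ∈ B) : A.ncard ≤ B.ncard := by
  rw [Subgraph.isPerfectMatching_iff] at hM
  choose f hf hf' using hM
  refine ncard_le_ncard_of_injOn f (fun a ha => h a ha _ (hf a)) ?_
  intro a _ b _ hab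
  have h1 := hf' (f a) a (hf a).symm
  have h2 := hf' (f a) b (hab ▸ (hf b).symm)
  exact h1.trans h2.symm

/-- In a connected graph every nonempty proper vertex set is left by some edge. -/
lemma SimpleGraph.Connected.exists_adj_mem_notMem {X : Type*} {G : SimpleGraph X}
    (hG : G.Connected) {C : Set X} {a b : X} (ha : a ∈ C) (hb : b ∉ C) :
    ∃ x ∈ C, ∃ y ∉ C, G.Adj x y := by
  obtain ⟨p⟩ := hG.preconnected a b
  obtain ⟨d, -, h1, h2⟩ := p.exists_boundary_dart C ha hb
  exact ⟨_, h1, _, h2, d.adj⟩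

/-- A graph is connected if every nonempty vertex set closed under adjacency is everything. -/
lemma SimpleGraph.connected_of_forall_closed {X : Type*} [Nonempty X] {G : SimpleGraph X}
    (h : ∀ C : Set X, C.Nonempty → (∀ a ∈ C, ∀ b, G.Adj a b → b ∈ C) → C = univ) :
    G.Connected := by
  refine connected_iff _ |>.mpr ⟨fun a b => ?_, inferInstance⟩
  have := h {c | G.Reachable a c} ⟨a, Reachable.refl a⟩
    (fun c hc d hcd => Reachable.trans hc hcd.reachable)
  exact (this.symm ▸ mem_univ b : b ∈ {c | G.Reachable a c})

namespace IsBipartition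

variable {H : SimpleGraph V} {U W : Set V}

lemma symm (h : IsBipartition H U W) : IsBipartition H W U :=
  ⟨h.1.symm, by rw [union_comm, h.2.1], fun a b hab => (h.2.2 a b hab).symm⟩

lemma mono {K : SimpleGraph V} (h : IsBipartition H U W) (hK : K ≤ H) : IsBipartition K U W :=
  ⟨h.1, h.2.1, fun a b hab => h.2.2 a b (hK hab)⟩

lemma isBipartiteWith (h : IsBipartition H U W) : H.IsBipartiteWith U W :=
  ⟨h.1, fun {a b} hab => h.2.2 a b hab⟩

lemma mem_or_mem (h : IsBipartition H U W) (a : V) : a ∈ U ∨ a ∈ W := by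
  have := mem_univ a
  rwa [← h.2.1] at this

lemma notMem_right (h : IsBipartition H U W) {a : V} (ha : a ∈ U) : a ∉ W :=
  h.1.notMem_of_mem_left ha

lemma mem_right (h : IsBipartition H U W) {a b : V} (ha : a ∈ U) (hab : H.Adj a b) : b ∈ W := by
  rcases h.2.2 a b hab with h1 | h1
  · exact h1.2
  · exact absurd h1.1 (h.notMem_right ha)

lemma mem_left (h : IsBipartition H U W) {a b : V} (hb : b ∈ W) (hab : H.Adj a b) : a ∈ U :=
  h.symm.mem_right hb hab.symm

lemma iUnion_neighborSet_subset (h : IsBipartition H U W) {X : Set V} (hX : X ⊆ U) :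
    (⋃ x ∈ X, H.neighborSet x) ⊆ W :=
  iUnion₂_subset fun _ hx _ hy => h.mem_right (hX hx) hy

lemma ncard_eq [Finite V] (h : IsBipartition H U W) {M : Subgraph H} (hM : M.IsPerfectMatching) :
    U.ncard = W.ncard :=
  le_antisymm (hM.ncard_le fun _ ha _ hab => h.mem_right ha hab.adj_sub)
    (hM.ncard_le fun _ ha _ hab => h.symm.mem_right ha hab.adj_sub)

/-- In a bipartite matching covered graph, Hall's condition is strict on proper subsets. -/
lemma ncard_lt_of_matchingCovered [Finite V] (h : IsBipartition H U W) (hH : MatchingCovered H)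
    {X : Set V} (hXU : X ⊆ U) (hne : X.Nonempty) (hX : X ≠ U) :
    X.ncard < (⋃ x ∈ X, H.neighborSet x).ncard := by
  by_contra! hle
  set Y := ⋃ x ∈ X, H.neighborSet x with hY
  have hYW : Y ⊆ W := h.iUnion_neighborSet_subset hXU
  have hadj : ∀ x ∈ X, ∀ y, H.Adj x y → y ∈ Y := fun x hx y hxy => mem_biUnion hx hxy
  obtain ⟨x, hx⟩ := hne
  obtain ⟨u, huU, huX⟩ := exists_of_ssubset (hXU.ssubset_of_ne hX)
  obtain ⟨a, ha, b, hb, hab⟩ := hH.1.exists_adj_mem_notMem (C := X ∪ Y) (Or.inl hx)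
    (b := u) (fun hu => hu.elim huX fun hu' => h.notMem_right huU (hYW hu'))
  have haY : a ∈ Y := ha.resolve_left fun haX => hb (Or.inr (hadj a haX b hab))
  obtain ⟨M, hM, heM⟩ := hH.2.2 s(a, b) hab
  have hMab : M.Adj a b := heM
  have hle' : X.ncard ≤ (Y \ {a}).ncard := by
    refine hM.ncard_le fun c hc d hcd => ⟨hadj c hc d hcd.adj_sub, ?_⟩
    rintro rfl
    have := (Subgraph.isPerfectMatching_iff.mp hM d).unique hcd.symm hMab
    exact hb (Or.inl (this ▸ hc))
  have := ncard_sdiff_singleton_add_one haY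
  omega

/-- Hall's theorem with a prescribed edge, under the strict form of Hall's condition. -/
lemma exists_isPerfectMatching_mem [Finite V] (h : IsBipartition H U W) (hc : U.ncard = W.ncard)
    (hall : ∀ X ⊆ U, X.Nonempty → X ≠ U → X.ncard < (⋃ x ∈ X, H.neighborSet x).ncard)
    {x y : V} (hx : x ∈ U) (hxy : H.Adj x y) :
    ∃ M : Subgraph H, M.IsPerfectMatching ∧ M.Adj x y := by
  classical
  have := Fintype.ofFinite V
  have hy := h.mem_right hx hxy
  have hyU : y ∉ U := fun hyU => h.notMem_right hyU hy
  set K := H.deleteEdges {f | f ≠ s(x, y) ∧ (x ∈ f ∨ y ∈ f)} with hK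
  have hKH : K ≤ H := deleteEdges_le _
  have hKx : ∀ b, K.Adj x b → b = y := by
    intro b hb
    simp only [hK, deleteEdges_adj, mem_ofPred_eq] at hb
    by_contra hne
    exact hb.2 ⟨by simp [hne, hxy.ne], by simp⟩
  have hKxy : K.Adj x y := by simp [hK, deleteEdges_adj, hxy]
  have hKother : ∀ a ∈ U, a ≠ x → ∀ b, H.Adj a b → b ≠ y → K.Adj a b := by
    intro a ha hax b hab hby
    have hbx : b ≠ x := fun hbx => h.notMem_right hx (hbx ▸ h.mem_right ha hab)
    have hay : a ≠ y := fun hay => hyU (hay ▸ ha)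
    simp only [hK, deleteEdges_adj, mem_ofPred_eq, Sym2.mem_iff]
    exact ⟨hab, fun hh => by grind⟩
  obtain ⟨M, hMU, hM⟩ := exists_isMatching_of_forall_ncard_le (h.mono hKH).isBipartiteWith
    (fun s hs => by
      have hs0 : (s \ {x}).ncard ≤ ((⋃ z ∈ s \ {x}, H.neighborSet z) \ {y}).ncard := by
        rcases (s \ {x}).eq_empty_or_nonempty with h0 | h0
        · simp [h0]
        · have := hall (s \ {x}) (sdiff_subset.trans hs) h0 (fun heq => by
            have : x ∈ s \ {x} := heq ▸ hx
            exact this.2 rfl)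
          have := pred_ncard_le_ncard_sdiff_singleton (⋃ z ∈ s \ {x}, H.neighborSet z) y
          omega
      have hsub : ((⋃ z ∈ s \ {x}, H.neighborSet z) \ {y}) ⊆ ⋃ z ∈ s, K.neighborSet z := by
        rintro b ⟨hb, hby⟩
        obtain ⟨z, hz, hzb⟩ := mem_iUnion₂.mp hb
        exact mem_biUnion hz.1 (hKother z (hs hz.1) hz.2 b hzb hby)
      by_cases hxs : x ∈ s
      · have h1 : insert y ((⋃ z ∈ s \ {x}, H.neighborSet z) \ {y}) ⊆
            ⋃ z ∈ s, K.neighborSet z := insert_subset (mem_biUnion hxs hKxy) hsub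
        have h2 := ncard_le_ncard h1
        rw [ncard_insert_of_notMem (by simp)] at h2
        have := ncard_sdiff_singleton_add_one hxs
        omega
      · rw [sdiff_singleton_eq_self hxs] at hs0
        rw [sdiff_singleton_eq_self hxs] at hsub
        exact hs0.trans (ncard_le_ncard hsub))
  have hspan : W ⊆ M.verts := by
    choose f hf hf' using fun u : U => hM (hMU u.2)
    have hinj : Function.Injective f := by
      intro a b hab
      exact Subtype.ext ((hM (M.edge_vert (hf a).symm)).unique (hf a).symm (hab ▸ (hf b).symm))
    have hrange : range f ⊆ W := by
      rintro _ ⟨u, rfl⟩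
      exact h.mem_right u.2 (hKH (hf u).adj_sub)
    have hcard : (range f).ncard = U.ncard := by
      rw [← image_univ, ncard_image_of_injective _ hinj, ncard_univ, Nat.card_coe_set_eq]
    rw [← eq_of_subset_of_ncard_le hrange (by omega)]
    rintro _ ⟨u, rfl⟩
    exact M.edge_vert (hf u).symm
  have hpm : M.IsPerfectMatching :=
    ⟨hM, fun v => (h.mem_or_mem v).elim (fun hv => hMU hv) fun hv => hspan hv⟩
  refine ⟨M.map (Hom.ofLE hKH), ?_, ?_⟩
  · rw [Subgraph.isPerfectMatching_iff] at hpm ⊢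
    intro v
    simpa [Subgraph.map_adj, Relation.map_id_id] using hpm v
  · obtain ⟨b, hb, -⟩ := Subgraph.isPerfectMatching_iff.mp hpm x
    have := hKx b hb.adj_sub
    subst this
    simpa [Subgraph.map_adj, Relation.map_id_id] using hb

/-- The strict form of Hall's condition characterises bipartite matching covered graphs. -/
lemma matchingCovered_of_ncard_lt [Finite V] (h : IsBipartition H U W)
    (hc : U.ncard = W.ncard) (hU : 2 ≤ U.ncard)
    (hall : ∀ X ⊆ U, X.Nonempty → X ≠ U → X.ncard < (⋃ x ∈ X, H.neighborSet x).ncard) :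
    MatchingCovered H := by
  obtain ⟨u, hu⟩ := nonempty_of_ncard_ne_zero (s := U) (by omega)
  obtain ⟨w, huw⟩ : ∃ w, H.Adj u w := by
    have := hall {u} (by simpa) (by simp) (by rintro rfl; simp at hU)
    obtain ⟨w, hw⟩ := nonempty_of_ncard_ne_zero (Nat.ne_zero_of_lt this)
    exact ⟨w, by simpa using hw⟩
  refine ⟨?_, ⟨s(u, w), huw⟩, ?_⟩
  · obtain ⟨M, hM, -⟩ := h.exists_isPerfectMatching_mem hc hall hu huw
    have hM' := Subgraph.isPerfectMatching_iff.mp hM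
    have : Nonempty V := ⟨u⟩
    refine connected_of_forall_closed fun C hCne hC => ?_
    have hle : (⋃ x ∈ C ∩ U, H.neighborSet x).ncard ≤ (C ∩ U).ncard := by
      refine hM.ncard_le fun b hb c hbc => ?_
      obtain ⟨a, ha, hab⟩ := mem_iUnion₂.mp hb
      have hbW := h.mem_right ha.2 hab
      exact ⟨hC b (hC a ha.1 b hab) c hbc.adj_sub, h.mem_left hbW hbc.adj_sub.symm⟩
    have hne : (C ∩ U).Nonempty := by
      obtain ⟨c, hcC⟩ := hCne
      rcases h.mem_or_mem c with hcU | hcW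
      · exact ⟨c, hcC, hcU⟩
      · obtain ⟨d, hd, -⟩ := hM' c
        exact ⟨d, hC c hcC d hd.adj_sub, h.mem_left hcW hd.adj_sub.symm⟩
    have hUC : U ⊆ C := by
      by_contra hUC
      have := hall (C ∩ U) inter_subset_right hne fun heq => hUC (inter_eq_right.mp heq)
      omega
    refine eq_univ_of_forall fun c => ?_
    rcases h.mem_or_mem c with hcU | hcW
    · exact hUC hcU
    · obtain ⟨d, hd, -⟩ := hM' c
      exact hC d (hUC (h.mem_left hcW hd.adj_sub.symm)) c hd.adj_sub.symm
  · intro e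
    induction e using Sym2.ind with
    | _ a b =>
      intro hab
      rcases h.2.2 a b hab with h1 | h1
      · exact h.exists_isPerfectMatching_mem hc hall h1.1 hab
      · obtain ⟨M, hM, hba⟩ := h.exists_isPerfectMatching_mem hc hall h1.2 (H.adj_symm hab)
        exact ⟨M, hM, hba.symm⟩

/-- A nonremovable edge `vw` of a bipartite matching covered graph is the only edge leaving
`X ∪ Y` from `X`, for some `X ∋ v` and `Y ∌ w` of equal size in the two colour classes. -/
lemma exists_tight_of_not_removable [Finite V] (h : IsBipartition H U W) (hH : MatchingCovered H)
    (hU : 2 ≤ U.ncard) {v w : V} (hvw : H.Adj v w) (hnr : ¬ Removable H s(v, w)) (hv : v ∈ U) :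
    ∃ X ⊆ U, ∃ Y ⊆ W, X.ncard = Y.ncard ∧ v ∈ X ∧ w ∉ Y ∧ X ≠ U ∧
      ∀ x ∈ X, ∀ y, H.Adj x y → y ∈ Y ∨ (x = v ∧ y = w) := by
  set K := H.deleteEdges {s(v, w)} with hK
  have hKH : K ≤ H := deleteEdges_le _
  have hKadj : ∀ a b, H.Adj a b → s(a, b) ≠ s(v, w) → K.Adj a b := by
    intro a b hab hne
    simpa [hK, deleteEdges_adj] using ⟨hab, by simpa using hne⟩
  obtain ⟨M, hM, -⟩ := hH.2.2 s(v, w) hvw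
  have hc := h.ncard_eq hM
  have hnmc : ¬ MatchingCovered K := fun hmc => hnr ⟨hvw, hmc⟩
  have hex := mt ((h.mono hKH).matchingCovered_of_ncard_lt hc hU) hnmc
  push Not at hex
  obtain ⟨X, hXU, hXne, hX, hle⟩ := hex
  have hlt := h.ncard_lt_of_matchingCovered hH hXU hXne hX
  have hadj : ∀ x ∈ X, ∀ y, H.Adj x y →
      y ∈ (⋃ x ∈ X, K.neighborSet x) ∨ (x = v ∧ y = w) := by
    intro x hx y hxy
    by_cases he : s(x, y) = s(v, w)
    · rcases Sym2.eq_iff.mp he with h1 | h1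
      · exact Or.inr h1
      · exact absurd (h1.1 ▸ h.mem_right hv hvw) (h.notMem_right (hXU hx))
    · exact Or.inl (mem_biUnion hx (hKadj x y hxy he))
  set Y := ⋃ x ∈ X, K.neighborSet x with hY
  have hsub : (⋃ x ∈ X, H.neighborSet x) ⊆ insert w Y := by
    intro y hy
    obtain ⟨x, hx, hxy⟩ := mem_iUnion₂.mp hy
    rcases hadj x hx y hxy with h1 | h1
    · exact Or.inr h1
    · exact Or.inl h1.2
  have hle1 := (ncard_le_ncard hsub).trans (ncard_insert_le w Y)
  refine ⟨X, hXU, Y, (h.mono hKH).iUnion_neighborSet_subset hXU, by omega, ?_, ?_, hX, hadj⟩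
  · by_contra hvX
    have : (⋃ x ∈ X, H.neighborSet x) ⊆ Y := by
      intro y hy
      obtain ⟨x, hx, hxy⟩ := mem_iUnion₂.mp hy
      exact (hadj x hx y hxy).resolve_right fun h1 => hvX (h1.1 ▸ hx)
    have := ncard_le_ncard this
    omega
  · intro hw
    rw [insert_eq_of_mem hw] at hsub
    have := ncard_le_ncard hsub
    omega

/-- Two tight pairs for distinct nonremovable edges at `v` cover the second colour class
as soon as the second parts share a vertex. -/
lemma subset_union_of_tight [Finite V] (h : IsBipartition H U W) (hH : MatchingCovered H)
    {v w₁ w₂ w₃ : V} {X₁ X₂ Y₁ Y₂ : Set V} (hX₁ : X₁ ⊆ U) (hX₂ : X₂ ⊆ U)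
    (hc₁ : X₁.ncard = Y₁.ncard) (hc₂ : X₂.ncard = Y₂.ncard) (hv₁ : v ∈ X₁) (hv₂ : v ∈ X₂)
    (hne : X₁ ≠ U) (h₁ : ∀ x ∈ X₁, ∀ y, H.Adj x y → y ∈ Y₁ ∨ (x = v ∧ y = w₁))
    (h₂ : ∀ x ∈ X₂, ∀ y, H.Adj x y → y ∈ Y₂ ∨ (x = v ∧ y = w₂))
    (hw₁ : w₁ ∈ Y₂) (hw₂ : w₂ ∈ Y₁) (hw₃ : w₃ ∈ Y₁ ∩ Y₂) : W ⊆ Y₁ ∪ Y₂ := by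
  have hunion : (⋃ x ∈ X₁ ∪ X₂, H.neighborSet x) ⊆ Y₁ ∪ Y₂ := by
    intro y hy
    obtain ⟨x, hx, hxy⟩ := mem_iUnion₂.mp hy
    rcases hx with hx | hx
    · rcases h₁ x hx y hxy with h3 | ⟨-, rfl⟩
      exacts [Or.inl h3, Or.inr hw₁]
    · rcases h₂ x hx y hxy with h3 | ⟨-, rfl⟩
      exacts [Or.inr h3, Or.inl hw₂]
  have hinter : (⋃ x ∈ (X₁ ∩ X₂) \ {v}, H.neighborSet x) ⊆ Y₁ ∩ Y₂ := by
    intro y hy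
    obtain ⟨x, ⟨hx, hxv⟩, hxy⟩ := mem_iUnion₂.mp hy
    exact ⟨(h₁ x hx.1 y hxy).resolve_right fun h3 => hxv h3.1,
      (h₂ x hx.2 y hxy).resolve_right fun h3 => hxv h3.1⟩
  have hX : X₁ ∪ X₂ = U := by
    by_contra hXU
    have hlt := h.ncard_lt_of_matchingCovered hH (union_subset hX₁ hX₂) ⟨v, Or.inl hv₁⟩ hXU
    have e1 := ncard_le_ncard hunion
    have e2 := ncard_union_add_ncard_inter X₁ X₂
    have e3 := ncard_union_add_ncard_inter Y₁ Y₂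
    have e4 := ncard_sdiff_singleton_add_one (s := X₁ ∩ X₂) ⟨hv₁, hv₂⟩
    have e5 := ncard_le_ncard hinter
    have e6 : 0 < (Y₁ ∩ Y₂).ncard := (ncard_pos).mpr ⟨w₃, hw₃⟩
    have hlt' := h.ncard_lt_of_matchingCovered hH (X := (X₁ ∩ X₂) \ {v})
      (fun x hx => hX₁ hx.1.1) (nonempty_of_ncard_ne_zero (by omega))
      (fun heq => hne (hX₁.antisymm fun x hx => (heq ▸ hx : x ∈ (X₁ ∩ X₂) \ {v}).1.1))
    omega
  intro y hy
  obtain ⟨u, huU, -⟩ := exists_of_ssubset (hX₁.ssubset_of_ne hne)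
  obtain ⟨a, hya⟩ : ∃ a, H.Adj y a := by
    have hyu : u ∉ ({y} : Set V) := fun hyu => h.notMem_right huU ((mem_singleton_iff.mp hyu) ▸ hy)
    obtain ⟨x, rfl, a, -, hxa⟩ := hH.1.exists_adj_mem_notMem (mem_singleton y) hyu
    exact ⟨a, hxa⟩
  exact hunion (mem_biUnion (hX ▸ h.mem_left hy hya.symm) hya.symm)

end IsBipartition

/-- In a near-bipartite brick, the doubleton edge inside `W` must meet the complement of the
second part of every tight pair: otherwise `(U \ X) ∪ {v}` would be a nontrivial barrier. -/
lemma IsBrick.mem_diff_of_tight [Finite V] {G : SimpleGraph V} (hG : IsBrick G)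
    {a1 b1 a2 b2 : V} {U W : Set V}
    (h : IsBipartition (G.deleteEdges {s(a1, b1), s(a2, b2)}) U W)
    (hc : U.ncard = W.ncard) (ha1 : a1 ∈ U) (hb1 : b1 ∈ U)
    {v w : V} {X Y : Set V} (hXU : X ⊆ U) (hYW : Y ⊆ W) (hXY : X.ncard = Y.ncard) (hv : v ∈ X)
    (hX : X ≠ U)
    (hadj : ∀ x ∈ X, ∀ y, (G.deleteEdges {s(a1, b1), s(a2, b2)}).Adj x y →
      y ∈ Y ∨ (x = v ∧ y = w)) :
    a2 ∈ W \ Y ∨ b2 ∈ W \ Y := by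
  by_contra! hcon
  obtain ⟨u, huU, huX⟩ := exists_of_ssubset (hXU.ssubset_of_ne hX)
  obtain ⟨M, hM⟩ := hG.2 v u (by rintro rfl; exact huX hv)
  have hle := hM.ncard_le (A := Subtype.val ⁻¹' (W \ Y)) (B := Subtype.val ⁻¹' ((U \ X) \ {u})) (by
    rintro ⟨y, hy⟩ hyW ⟨x, hx⟩ hMyx
    have hyx : G.Adj y x := hMyx.adj_sub
    simp only [mem_preimage] at hyW ⊢
    simp only [mem_compl_iff, mem_insert_iff, mem_singleton_iff, not_or] at hx
    have hyx' : (G.deleteEdges {s(a1, b1), s(a2, b2)}).Adj y x := by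
      rw [deleteEdges_adj]
      refine ⟨hyx, ?_⟩
      have hya1 : y ≠ a1 := fun e => h.notMem_right ha1 (e ▸ hyW.1)
      have hyb1 : y ≠ b1 := fun e => h.notMem_right hb1 (e ▸ hyW.1)
      have hya2 : y ≠ a2 := fun e => hcon.1 (e ▸ hyW)
      have hyb2 : y ≠ b2 := fun e => hcon.2 (e ▸ hyW)
      simp [hya1, hyb1, hya2, hyb2]
    have hxU := h.mem_left hyW.1 hyx'.symm
    refine ⟨⟨hxU, fun hxX => ?_⟩, hx.2⟩
    rcases hadj x hxX y hyx'.symm with h1 | h1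
    · exact hyW.2 h1
    · exact hx.1 h1.1)
  have hvU := hXU hv
  rw [ncard_preimage_of_injective_subset_range Subtype.val_injective,
    ncard_preimage_of_injective_subset_range Subtype.val_injective,
    ncard_sdiff hYW] at hle
  · have e1 := ncard_sdiff_singleton_add_one (s := U \ X) ⟨huU, huX⟩
    have e2 := ncard_sdiff hXU
    omega
  · rintro x ⟨⟨hxU, hxX⟩, hxu⟩
    simp only [Subtype.range_coe_subtype, mem_ofPred_eq, mem_compl_iff, mem_insert_iff, not_or]
    exact ⟨fun e => hxX (e ▸ hv), hxu⟩
  · rintro y ⟨hyW, -⟩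
    simp only [Subtype.range_coe_subtype, mem_ofPred_eq, mem_compl_iff, mem_insert_iff,
      mem_singleton_iff, not_or]
    exact ⟨fun e => h.notMem_right hvU (e ▸ hyW), fun e => h.notMem_right huU (e ▸ hyW)⟩

/-- In a near-bipartite brick, a vertex is incident with at most two edges that are nonremovable
in the bipartite graph obtained by deleting the doubleton. -/
lemma IsBrick.ncard_not_removable_le_two [Finite V] {G : SimpleGraph V} (hG : IsBrick G)
    {a1 b1 a2 b2 : V} (hH : MatchingCovered (G.deleteEdges {s(a1, b1), s(a2, b2)}))
    {U W : Set V} (h : IsBipartition (G.deleteEdges {s(a1, b1), s(a2, b2)}) U W)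
    (ha1 : a1 ∈ U) (hb1 : b1 ∈ U) {v : V} (hv : v ∈ U) :
    {e : Sym2 V | v ∈ e ∧ e ∈ (G.deleteEdges {s(a1, b1), s(a2, b2)}).edgeSet ∧
      ¬ Removable (G.deleteEdges {s(a1, b1), s(a2, b2)}) e}.ncard ≤ 2 := by
  by_contra! hlt
  obtain ⟨p, hp, q, hq, r, hr, hpq, hpr, hqr⟩ := (two_lt_ncard (toFinite _)).mp hlt
  obtain ⟨⟨w₁, rfl⟩, hw₁, hn₁⟩ := hp
  obtain ⟨⟨w₂, rfl⟩, hw₂, hn₂⟩ := hq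
  obtain ⟨⟨w₃, rfl⟩, hw₃, hn₃⟩ := hr
  rw [mem_edgeSet] at hw₁ hw₂ hw₃
  have h12 : w₁ ≠ w₂ := fun e => hpq (e ▸ rfl)
  have h13 : w₁ ≠ w₃ := fun e => hpr (e ▸ rfl)
  have h23 : w₂ ≠ w₃ := fun e => hqr (e ▸ rfl)
  obtain ⟨M, hM, -⟩ := hH.2.2 s(v, w₁) hw₁
  have hc := h.ncard_eq hM
  have hU : 2 ≤ U.ncard := by
    have h4 := hG.1.1
    have e1 := ncard_union_eq h.1
    rw [h.2.1, ncard_univ] at e1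
    omega
  obtain ⟨X₁, hX₁, Y₁, hY₁, hc₁, hv₁, -, hne₁, ht₁⟩ :=
    h.exists_tight_of_not_removable hH hU hw₁ hn₁ hv
  obtain ⟨X₂, hX₂, Y₂, hY₂, hc₂, hv₂, -, hne₂, ht₂⟩ :=
    h.exists_tight_of_not_removable hH hU hw₂ hn₂ hv
  obtain ⟨X₃, hX₃, Y₃, hY₃, hc₃, hv₃, -, hne₃, ht₃⟩ :=
    h.exists_tight_of_not_removable hH hU hw₃ hn₃ hv
  have m12 : w₁ ∈ Y₂ := (ht₂ v hv₂ w₁ hw₁).resolve_right fun e => h12 e.2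
  have m13 : w₁ ∈ Y₃ := (ht₃ v hv₃ w₁ hw₁).resolve_right fun e => h13 e.2
  have m21 : w₂ ∈ Y₁ := (ht₁ v hv₁ w₂ hw₂).resolve_right fun e => h12 e.2.symm
  have m23 : w₂ ∈ Y₃ := (ht₃ v hv₃ w₂ hw₂).resolve_right fun e => h23 e.2
  have m31 : w₃ ∈ Y₁ := (ht₁ v hv₁ w₃ hw₃).resolve_right fun e => h13 e.2.symm
  have m32 : w₃ ∈ Y₂ := (ht₂ v hv₂ w₃ hw₃).resolve_right fun e => h23 e.2.symm
  have c12 : W ⊆ Y₁ ∪ Y₂ :=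
    h.subset_union_of_tight hH hX₁ hX₂ hc₁ hc₂ hv₁ hv₂ hne₁ ht₁ ht₂ m12 m21 ⟨m31, m32⟩
  have c13 : W ⊆ Y₁ ∪ Y₃ :=
    h.subset_union_of_tight hH hX₁ hX₃ hc₁ hc₃ hv₁ hv₃ hne₁ ht₁ ht₃ m13 m31 ⟨m21, m23⟩
  have c23 : W ⊆ Y₂ ∪ Y₃ :=
    h.subset_union_of_tight hH hX₂ hX₃ hc₂ hc₃ hv₂ hv₃ hne₂ ht₂ ht₃ m23 m32 ⟨m12, m13⟩
  have d₁ := hG.mem_diff_of_tight h hc ha1 hb1 hX₁ hY₁ hc₁ hv₁ hne₁ ht₁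
  have d₂ := hG.mem_diff_of_tight h hc ha1 hb1 hX₂ hY₂ hc₂ hv₂ hne₂ ht₂
  have d₃ := hG.mem_diff_of_tight h hc ha1 hb1 hX₃ hY₃ hc₃ hv₃ hne₃ ht₃
  have hdisj : ∀ {A B : Set V}, W ⊆ A ∪ B → ∀ {z}, z ∈ W \ A → z ∉ W \ B :=
    fun hAB _ hA hB => (hAB hA.1).elim hA.2 hB.2
  rcases d₁ with d₁ | d₁ <;> rcases d₂ with d₂ | d₂ <;> rcases d₃ with d₃ | d₃ <;>
    first
      | exact hdisj c12 d₁ d₂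
      | exact hdisj c13 d₁ d₃
      | exact hdisj c23 d₂ d₃

/-- every vertex of a near-bipartite brick is incident with at
most two nonremovable edges of type II. -/
theorem stmt10 [Fintype V] (G : SimpleGraph V) (hG : IsBrick G)
    (a1 b1 a2 b2 : V) (he1 : G.Adj a1 b1) (he2 : G.Adj a2 b2)
    (hnee : s(a1, b1) ≠ s(a2, b2))
    (hnr1 : ¬ Removable G s(a1, b1)) (hnr2 : ¬ Removable G s(a2, b2))
    (hH : MatchingCovered (G.deleteEdges {s(a1, b1), s(a2, b2)}))
    (U W : Set V)
    (hbip : IsBipartition (G.deleteEdges {s(a1, b1), s(a2, b2)}) U W)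
    (ha1 : a1 ∈ U) (hb1 : b1 ∈ U) (ha2 : a2 ∈ W) (hb2 : b2 ∈ W) :
    ∀ v : V,
      {e : Sym2 V | v ∈ e ∧ e ≠ s(a1, b1) ∧ e ≠ s(a2, b2) ∧ e ∈ G.edgeSet ∧
        ¬ Removable G e ∧
        ¬ Removable (G.deleteEdges {s(a1, b1), s(a2, b2)}) e}.ncard ≤ 2 := by
  intro v
  rcases hbip.mem_or_mem v with hv | hv
  · refine le_trans (ncard_le_ncard ?_ (toFinite _))
      (hG.ncard_not_removable_le_two hH hbip ha1 hb1 hv)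
    rintro e ⟨hve, hne1, hne2, heG, -, hnr⟩
    exact ⟨hve, by simp [edgeSet_deleteEdges, heG, hne1, hne2], hnr⟩
  · rw [pair_comm] at hH hbip
    refine le_trans (ncard_le_ncard ?_ (toFinite _))
      (hG.ncard_not_removable_le_two hH hbip.symm ha2 hb2 hv)
    rintro e ⟨hve, hne1, hne2, heG, -, hnr⟩
    exact ⟨hve, by simp [edgeSet_deleteEdges, heG, hne1, hne2], by rwa [pair_comm] at hnr⟩
end

section
/- Every near-bipartite brick G other than K4, with n vertices, has at least (n − 6)/2 removable edges. -/
open SimpleGraph Set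

universe u
variable {V : Type u}

namespace NearBipartite

section Bipartite

variable {α β : Type u}

open Classical in
/-- The set of elements of `β` related to some element of `Y`. -/
noncomputable def nbrs {α β : Type u} [Fintype β] (r : α → β → Prop) (Y : Finset α) : Finset β :=
  Finset.univ.filter fun w => ∃ x ∈ Y, r x w

lemma mem_nbrs {α β : Type u} [Fintype β] {r : α → β → Prop} {Y : Finset α} {w : β} :
    w ∈ nbrs r Y ↔ ∃ x ∈ Y, r x w := by
  simp [nbrs]

open Classical in
/-- Hall's theorem with the values outside `P` prescribed by `p`. -/
lemma exists_injective_of_hall [Fintype β] (r : α → β → Prop) (P : Finset α)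
    (Q : Finset β) (p : α → β)
    (hpQ : ∀ x ∉ P, p x ∈ Q) (hp : ∀ x ∉ P, ∀ y ∉ P, p x = p y → x = y)
    (hall : ∀ Y ⊆ P, Y.card ≤ (nbrs r Y \ Q).card) :
    ∃ g : α → β, Function.Injective g ∧ (∀ x ∉ P, g x = p x) ∧ ∀ x ∈ P, r x (g x) := by
  obtain ⟨f, hf, hfr⟩ := (Finset.all_card_le_biUnion_card_iff_exists_injective
    (fun x : P => nbrs r {x.1} \ Q)).1 (by
      intro s
      have h := hall (s.image Subtype.val) (by
        intro x hx
        obtain ⟨y, -, rfl⟩ := Finset.mem_image.1 hx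
        exact y.2)
      rw [Finset.card_image_of_injective _ Subtype.val_injective] at h
      refine h.trans (Finset.card_le_card ?_)
      intro w hw
      simp only [Finset.mem_sdiff, mem_nbrs, Finset.mem_image, Finset.mem_biUnion,
        Finset.mem_singleton] at hw ⊢
      grind)
  have hfr' : ∀ x : P, r x (f x) ∧ f x ∉ Q := by
    intro x
    have := hfr x
    simp only [Finset.mem_sdiff, mem_nbrs, Finset.mem_singleton] at this
    grind
  refine ⟨fun x => if h : x ∈ P then f ⟨x, h⟩ else p x, ?_, ?_, ?_⟩
  · intro x y hxy
    by_cases hx : x ∈ P <;> by_cases hy : y ∈ P <;> simp only [hx, hy, dif_pos, dif_neg,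
      not_false_eq_true] at hxy
    · simpa using congrArg Subtype.val (hf hxy)
    · exact absurd (hxy ▸ hpQ y hy) (hfr' ⟨x, hx⟩).2
    · exact absurd (hxy ▸ hpQ x hx) (hfr' ⟨y, hy⟩).2
    · exact hp x hx y hy hxy
  · intro x hx
    simp [hx]
  · intro x hx
    simpa [hx] using (hfr' ⟨x, hx⟩).1

/-- `g` matches `α` minus `{a, a'}` with `β` minus `{b, b'}` along `r`, and sends `a, a'` to
`b, b'`. -/
structure IsCoreMatching (r : α → β → Prop) (a a' : α) (b b' : β) (g : α → β) : Prop where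
  injective : Function.Injective g
  map_left : g a = b
  map_right : g a' = b'
  rel : ∀ x, x ≠ a → x ≠ a' → r x (g x)

/-- The conditions on matchings of `r` that make the edge `(u, v)` removable once the edges
`a a'` and `b b'` are added. -/
def RemovablePair (r : α → β → Prop) (a a' : α) (b b' : β) (u : α) (v : β) : Prop :=
  (∃ g, IsCoreMatching r a a' b b' g ∧ g u ≠ v) ∧
  ∀ x w, r x w → (x = u → w ≠ v) →
    (∃ f : α → β, Function.Injective f ∧ (∀ z, r z (f z)) ∧ f u ≠ v ∧ f x = w) ∨
    (∃ g, IsCoreMatching r a a' b b' g ∧ g u ≠ v ∧ x ≠ a ∧ x ≠ a' ∧ g x = w)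

variable [Fintype α] [Fintype β] {r : α → β → Prop} {a a' u : α} {b b' v : β}

open Classical in
lemma exists_tight_of_forced {M : α → β} (hM : IsCoreMatching r a a' b b' M) (haa : a ≠ a')
    (hbb : b ≠ b') (hua : u ≠ a) (hua' : u ≠ a') (h : ∀ g, IsCoreMatching r a a' b b' g → g u = v) :
    ∃ Y : Finset α, a ∉ Y ∧ a' ∉ Y ∧ u ∉ Y ∧ nbrs r Y \ {b, b'} = Y.image M ∧
      ∀ w, r u w → w = v ∨ w = b ∨ w = b' ∨ w ∈ Y.image M := by
  set r' : α → β → Prop := fun x w => r x w ∧ ¬ (x = u ∧ w = v) with hr'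
  have hnot : ¬ ∀ Y ⊆ ({a, a'}ᶜ : Finset α), Y.card ≤ (nbrs r' Y \ {b, b'}).card := by
    intro hall
    obtain ⟨g, hg, hgp, hgr⟩ := exists_injective_of_hall r' {a, a'}ᶜ {b, b'}
      (fun x => if x = a then b else b') (by intro x _; grind)
      (by intro x hx y hy; simp only [Finset.mem_compl, not_not] at hx hy; grind) hall
    have hg' : IsCoreMatching r a a' b b' g :=
      ⟨hg, by simpa using hgp a (by simp), by simpa [haa.symm] using hgp a' (by simp),
        fun x h1 h2 => (hgr x (by simp [h1, h2])).1⟩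
    exact (hgr u (by simp [hua, hua'])).2 ⟨rfl, h g hg'⟩
  push Not at hnot
  obtain ⟨Y, hYP, hY⟩ := hnot
  have haY : a ∉ Y := fun h => by simpa using hYP h
  have ha'Y : a' ∉ Y := fun h => by simpa using hYP h
  have hMb : ∀ x ∈ Y, M x ≠ b ∧ M x ≠ b' := fun x hx =>
    ⟨fun h => haY (hM.injective (h.trans hM.map_left.symm) ▸ hx),
      fun h => ha'Y (hM.injective (h.trans hM.map_right.symm) ▸ hx)⟩
  have hMr : ∀ x ∈ Y, r x (M x) := fun x hx =>
    hM.rel x (fun h => haY (h ▸ hx)) (fun h => ha'Y (h ▸ hx))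
  have hsub : (Y.erase u).image M ⊆ nbrs r (Y.erase u) \ {b, b'} := by
    intro w hw
    simp only [Finset.mem_sdiff, mem_nbrs, Finset.mem_image] at hw ⊢
    grind
  have hsub' : nbrs r (Y.erase u) \ {b, b'} ⊆ nbrs r' Y \ {b, b'} := by
    intro w hw
    simp only [Finset.mem_sdiff, mem_nbrs] at hw ⊢
    grind
  have hcard : ((Y.erase u).image M).card = (Y.erase u).card :=
    Finset.card_image_of_injective _ hM.injective
  have hle := Finset.card_le_card (hsub.trans hsub')
  have hYE : Y.card ≤ (Y.erase u).card + 1 := by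
    have := Finset.pred_card_le_card_erase (s := Y) (a := u)
    omega
  have huY : u ∈ Y := by
    by_contra huY
    rw [Finset.erase_eq_of_notMem huY] at hle hcard
    omega
  have heq := Finset.eq_of_subset_of_card_le (hsub.trans hsub') (by omega)
  have heq' : nbrs r (Y.erase u) \ {b, b'} = (Y.erase u).image M :=
    Finset.Subset.antisymm (heq ▸ hsub') hsub
  refine ⟨Y.erase u, by grind, by grind, by simp, heq', ?_⟩
  intro w hw
  rw [heq]
  simp only [Finset.mem_sdiff, mem_nbrs]
  grind

open Classical in
lemma exists_block (hcard : Fintype.card α = Fintype.card β)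
    (hα : ∀ Y : Finset α, Y.Nonempty → Y ≠ Finset.univ → Y.card < (nbrs r Y).card)
    {x : α} {w : β} (hxw : r x w) (hne : x = u → w ≠ v)
    (h : ¬ ∃ f : α → β, Function.Injective f ∧ (∀ z, r z (f z)) ∧ f u ≠ v ∧ f x = w) :
    ∃ (R : Finset α) (T : Finset β), R.card = T.card ∧ u ∉ R ∧ v ∈ T ∧
      (∀ t ∈ T, ∀ z, r z t → z ∈ R ∨ z = u) ∧ (∀ t ∈ T, r u t → t = v) ∧ x ∈ R ∧ w ∉ T := by
  set r' : α → β → Prop := fun x w => r x w ∧ ¬ (x = u ∧ w = v) with hr'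
  have hnot : ¬ ∀ Y ⊆ ({x}ᶜ : Finset α), Y.card ≤ (nbrs r' Y \ {w}).card := by
    intro hall
    obtain ⟨g, hg, hgp, hgr⟩ := exists_injective_of_hall r' {x}ᶜ {w}
      (fun _ => w) (by simp)
      (by intro x hx y hy; simp only [Finset.mem_compl, not_not] at hx hy; grind) hall
    have hgx : g x = w := hgp x (by simp)
    refine h ⟨g, hg, fun z => ?_, fun hgu => ?_, hgx⟩
    · by_cases hz : z = x
      · subst hz; rwa [hgx]
      · exact (hgr z (by simpa using hz)).1
    · by_cases hux : u = x
      · subst hux; exact hne rfl (hgx.symm.trans hgu)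
      · exact (hgr u (by simpa using hux)).2 ⟨rfl, hgu⟩
  push Not at hnot
  obtain ⟨X, hXP, hX⟩ := hnot
  have hxX : x ∉ X := fun h => by simpa using hXP h
  have hstrict := hα X (Finset.card_pos.1 (by omega)) (fun h => hxX (h ▸ Finset.mem_univ x))
  have h1 : nbrs r X ⊆ insert v (nbrs r' X) := by
    intro y hy
    simp only [Finset.mem_insert, mem_nbrs] at hy ⊢
    grind
  have h2 : nbrs r' X ⊆ insert w (nbrs r' X \ {w}) := by
    intro y hy
    simp only [Finset.mem_insert, Finset.mem_sdiff, Finset.mem_singleton]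
    tauto
  have h1c := (Finset.card_le_card h1).trans (Finset.card_insert_le _ _)
  have h2c := (Finset.card_le_card h2).trans (Finset.card_insert_le _ _)
  have hcX : (nbrs r' X).card = X.card := by omega
  have hv : v ∉ nbrs r' X := by
    intro hv
    rw [Finset.insert_eq_of_mem hv] at h1
    have := Finset.card_le_card h1
    omega
  have hw : w ∈ nbrs r' X := by
    by_contra hw
    rw [Finset.sdiff_singleton_eq_erase, Finset.erase_eq_of_notMem hw] at hX
    omega
  have huX : u ∈ X := by
    by_contra huX
    have : nbrs r X ⊆ nbrs r' X := by
      intro y hy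
      simp only [mem_nbrs] at hy ⊢
      grind
    have := Finset.card_le_card this
    omega
  refine ⟨Xᶜ, (nbrs r' X)ᶜ, ?_, by simpa using huX, by simpa using hv, ?_, ?_, by simpa using hxX,
    by simpa using hw⟩
  · rw [Finset.card_compl, Finset.card_compl, hcX, hcard]
  · intro t ht z hz
    simp only [Finset.mem_compl, mem_nbrs] at ht ⊢
    grind
  · intro t ht hut
    simp only [Finset.mem_compl, mem_nbrs] at ht
    grind

open Classical in
lemma exists_tight_of_not_covered {M : α → β} (hM : IsCoreMatching r a a' b b' M) (haa : a ≠ a')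
    (hbb : b ≠ b') {x : α} {w : β} (hxw : r x w) (hxa : x ≠ a) (hxa' : x ≠ a') (hwb : w ≠ b)
    (hwb' : w ≠ b') (h : ∀ g, IsCoreMatching r a a' b b' g → g x ≠ w) :
    ∃ D : Finset α, a ∉ D ∧ a' ∉ D ∧ x ∉ D ∧ nbrs r D \ {b, b'} = D.image M ∧ w ∈ D.image M := by
  have hnot : ¬ ∀ Y ⊆ ({a, a', x}ᶜ : Finset α), Y.card ≤ (nbrs r Y \ {b, b', w}).card := by
    intro hall
    obtain ⟨g, hg, hgp, hgr⟩ := exists_injective_of_hall r {a, a', x}ᶜ {b, b', w}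
      (fun x => if x = a then b else if x = a' then b' else w) (by intro x _; grind)
      (by intro x hx y hy; simp only [Finset.mem_compl, not_not] at hx hy; grind) hall
    have hgx : g x = w := by simpa [hxa, hxa'] using hgp x (by simp)
    refine h g ⟨hg, by simpa using hgp a (by simp), by simpa [haa.symm] using hgp a' (by simp),
        fun z h1 h2 => ?_⟩ hgx
    by_cases hz : z = x
    · subst hz; rwa [hgx]
    · exact hgr z (by simp [h1, h2, hz])
  push Not at hnot
  obtain ⟨D, hDP, hD⟩ := hnot
  have haD : a ∉ D := fun h => by simpa using hDP h
  have ha'D : a' ∉ D := fun h => by simpa using hDP h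
  have hxD : x ∉ D := fun h => by simpa using hDP h
  have hsub : D.image M ⊆ nbrs r D \ {b, b'} := by
    intro w hw
    have h1 := hM.map_left
    have h2 := hM.map_right
    have h3 := hM.rel
    have h4 := hM.injective
    simp only [Finset.mem_sdiff, mem_nbrs, Finset.mem_image, Finset.mem_insert,
      Finset.mem_singleton] at hw ⊢
    obtain ⟨z, hz, rfl⟩ := hw
    refine ⟨⟨z, hz, h3 z (by grind) (by grind)⟩, ?_⟩
    rintro (h | h)
    · exact haD (h4 (h.trans h1.symm) ▸ hz)
    · exact ha'D (h4 (h.trans h2.symm) ▸ hz)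
  have hcard : (D.image M).card = D.card := Finset.card_image_of_injective _ hM.injective
  have hsub' : nbrs r D \ {b, b'} ⊆ insert w (nbrs r D \ {b, b', w}) := by
    intro y hy
    simp only [Finset.mem_insert, Finset.mem_sdiff, Finset.mem_singleton] at hy ⊢
    tauto
  have h1 := (Finset.card_le_card hsub').trans (Finset.card_insert_le _ _)
  have heq := Finset.eq_of_subset_of_card_le hsub (by omega)
  refine ⟨D, haD, ha'D, hxD, heq.symm, ?_⟩
  rw [heq]
  by_contra hw
  have : nbrs r D \ {b, b'} ⊆ nbrs r D \ {b, b', w} := by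
    intro y hy
    have : y ≠ w := fun h => hw (h ▸ hy)
    simp only [Finset.mem_insert, Finset.mem_sdiff, Finset.mem_singleton] at hy ⊢
    tauto
  have := Finset.card_le_card this
  have := Finset.card_le_card hsub
  omega

open Classical in
lemma block_subset_of_tight (hcard : Fintype.card α = Fintype.card β) {M : α → β}
    (hM : IsCoreMatching r a a' b b' M)
    (hα : ∀ Y : Finset α, Y.Nonempty → (Y \ {a, a'}).card + 2 ≤ (nbrs r Y).card)
    (hβ : ∀ T : Finset β, T.Nonempty →
      (T \ {b, b'}).card + 2 ≤ (nbrs (fun w x => r x w) T).card)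
    {R : Finset α} {T : Finset β} (hRT : R.card = T.card)
    (hT : ∀ t ∈ T, ∀ z, r z t → z ∈ R ∨ z = u) (hbT : b ∈ T) (hb'T : b' ∉ T) (hMu : M u ∉ T)
    (hb'R : ∀ z, r z b' → z ∉ R) {D : Finset α} (haD : a ∉ D) (ha'D : a' ∉ D) (huD : u ∉ D)
    (hD : nbrs r D \ {b, b'} = D.image M) (hne : D.Nonempty) : R ⊆ D := by
  have hDaa : ∀ E ⊆ D, E \ {a, a'} = E := by
    intro E hE
    ext z
    have := @hE z
    simp only [Finset.mem_sdiff, Finset.mem_insert, Finset.mem_singleton]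
    grind
  have hDcard : (D.image M).card = D.card := Finset.card_image_of_injective _ hM.injective
  -- a tight set is adjacent to both `b` and `b'`
  have hb' : b' ∈ nbrs r D := by
    by_contra hb'
    have h1 : nbrs r D ⊆ insert b (nbrs r D \ {b, b'}) := by
      intro y hy
      have : y ≠ b' := fun h => hb' (h ▸ hy)
      simp only [Finset.mem_insert, Finset.mem_sdiff, Finset.mem_singleton]
      tauto
    have h2 := (Finset.card_le_card h1).trans (Finset.card_insert_le _ _)
    have h3 := hα D hne
    rw [hDaa D subset_rfl] at h3
    rw [hD] at h2
    omega
  obtain ⟨z, hzD, hzb'⟩ := mem_nbrs.1 hb'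
  have hDR : (D \ R).Nonempty := ⟨z, Finset.mem_sdiff.2 ⟨hzD, hb'R z hzb'⟩⟩
  have hDRT : ∀ y ∈ nbrs r (D \ R), y ∉ T := by
    intro y hy hyT
    obtain ⟨x, hx, hxy⟩ := mem_nbrs.1 hy
    rw [Finset.mem_sdiff] at hx
    rcases hT y hyT x hxy with h | h
    · exact hx.2 h
    · exact huD (h ▸ hx.1)
  obtain ⟨r₁, hr₁D, hr₁R, hr₁T⟩ : ∃ r₁ ∈ D, r₁ ∈ R ∧ M r₁ ∉ T := by
    by_contra hcon
    push Not at hcon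
    have h1 : nbrs r (D \ R) ⊆ insert b' ((D \ R).image M) := by
      intro y hy
      have hyT := hDRT y hy
      by_cases hyb' : y = b'
      · simp [hyb']
      · have hyb : y ≠ b := fun h => hyT (h ▸ hbT)
        have : y ∈ D.image M := by
          rw [← hD]
          obtain ⟨x, hx, hxy⟩ := mem_nbrs.1 hy
          simp only [Finset.mem_sdiff, mem_nbrs, Finset.mem_insert, Finset.mem_singleton]
          exact ⟨⟨x, (Finset.mem_sdiff.1 hx).1, hxy⟩, by tauto⟩
        obtain ⟨x, hxD, rfl⟩ := Finset.mem_image.1 this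
        refine Finset.mem_insert_of_mem (Finset.mem_image_of_mem _ (Finset.mem_sdiff.2 ⟨hxD, ?_⟩))
        exact fun hxR => hyT (hcon x hxD hxR)
    have h2 := (Finset.card_le_card h1).trans (Finset.card_insert_le _ _)
    rw [Finset.card_image_of_injective _ hM.injective] at h2
    have h3 := hα _ hDR
    rw [hDaa _ Finset.sdiff_subset] at h3
    omega
  have hsurj : Function.Surjective M :=
    ((Fintype.bijective_iff_injective_and_card M).2 ⟨hM.injective, hcard⟩).2
  have hTR : T.erase b ⊆ (R.erase r₁).image M := by
    intro t ht
    obtain ⟨htb, htT⟩ := Finset.mem_erase.1 ht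
    obtain ⟨x, rfl⟩ := hsurj t
    have hxa : x ≠ a := by rintro rfl; exact htb hM.map_left
    have hxa' : x ≠ a' := by rintro rfl; exact hb'T (hM.map_right ▸ htT)
    refine Finset.mem_image_of_mem _ (Finset.mem_erase.2 ⟨?_, ?_⟩)
    · rintro rfl; exact hr₁T htT
    · rcases hT _ htT x (hM.rel x hxa hxa') with h | rfl
      · exact h
      · exact absurd htT hMu
  have hTReq : T.erase b = (R.erase r₁).image M := by
    refine Finset.eq_of_subset_of_card_le hTR ?_
    rw [Finset.card_image_of_injective _ hM.injective, Finset.card_erase_of_mem hr₁R,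
      Finset.card_erase_of_mem hbT, hRT]
  intro x₀ hx₀R
  by_contra hx₀D
  set T' := T.erase b \ D.image M with hT'
  have hRD : (R \ D).image M ⊆ T' := by
    intro y hy
    obtain ⟨x, hx, rfl⟩ := Finset.mem_image.1 hy
    obtain ⟨hxR, hxD⟩ := Finset.mem_sdiff.1 hx
    refine Finset.mem_sdiff.2 ⟨?_, ?_⟩
    · rw [hTReq]
      exact Finset.mem_image_of_mem _ (Finset.mem_erase.2 ⟨fun h => hxD (h ▸ hr₁D), hxR⟩)
    · rw [hM.injective.mem_finset_image]
      exact hxD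
  have hT'ne : T'.Nonempty :=
    ⟨M x₀, hRD (Finset.mem_image_of_mem _ (Finset.mem_sdiff.2 ⟨hx₀R, hx₀D⟩))⟩
  have hT'bb : T' \ {b, b'} = T' := by
    ext t
    simp only [hT', Finset.mem_sdiff, Finset.mem_insert, Finset.mem_singleton, Finset.mem_erase]
    grind
  have hN : nbrs (fun w x => r x w) T' ⊆ insert u (R \ D) := by
    intro z hz
    obtain ⟨t, ht, hzt⟩ := mem_nbrs.1 hz
    have htbb : t ∉ ({b, b'} : Finset β) := by
      rw [← hT'bb] at ht
      exact (Finset.mem_sdiff.1 ht).2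
    obtain ⟨ht1, ht2⟩ := Finset.mem_sdiff.1 ht
    rcases hT t (Finset.mem_erase.1 ht1).2 z hzt with h | h
    · refine Finset.mem_insert_of_mem (Finset.mem_sdiff.2 ⟨h, fun hzD => ht2 ?_⟩)
      rw [← hD]
      exact Finset.mem_sdiff.2 ⟨mem_nbrs.2 ⟨z, hzD, hzt⟩, htbb⟩
    · exact Finset.mem_insert.2 (Or.inl h)
  have h1 := (Finset.card_le_card hN).trans (Finset.card_insert_le _ _)
  have h2 := Finset.card_le_card hRD
  rw [Finset.card_image_of_injective _ hM.injective] at h2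
  have h3 := hβ T' hT'ne
  rw [hT'bb] at h3
  omega

open Classical in
lemma blocks_disjoint
    (hβ : ∀ T : Finset β, T.Nonempty → T ≠ Finset.univ →
      T.card < (nbrs (fun w x => r x w) T).card)
    {v' v₀ : β} (huv : r u v) (hv : v ≠ v') (huv₀ : r u v₀) (hv₀ : v₀ ≠ v)
    (hv₀' : v₀ ≠ v') {R R' : Finset α} {T T' : Finset β} (hRT : R.card = T.card)
    (hRT' : R'.card = T'.card) (hvT : v ∈ T)
    (hT : ∀ t ∈ T, ∀ z, r z t → z ∈ R ∨ z = u) (hT' : ∀ t ∈ T', ∀ z, r z t → z ∈ R' ∨ z = u)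
    (hTu : ∀ t ∈ T, r u t → t = v) (hTu' : ∀ t ∈ T', r u t → t = v') :
    Disjoint R R' ∧ Disjoint T T' := by
  have hJ : (T ∪ T').card < (nbrs (fun w x => r x w) (T ∪ T')).card := by
    refine hβ _ ⟨v, Finset.mem_union_left _ hvT⟩ fun h => ?_
    rcases Finset.mem_union.1 (h ▸ Finset.mem_univ v₀) with h | h
    · exact hv₀ (hTu _ h huv₀)
    · exact hv₀' (hTu' _ h huv₀)
  have hJ' : nbrs (fun w x => r x w) (T ∪ T') ⊆ insert u (R ∪ R') := by
    intro z hz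
    obtain ⟨t, ht, hzt⟩ := mem_nbrs.1 hz
    simp only [Finset.mem_insert, Finset.mem_union] at ht ⊢
    rcases ht with ht | ht
    · have := hT t ht z hzt; tauto
    · have := hT' t ht z hzt; tauto
  have hJc := (Finset.card_le_card hJ').trans (Finset.card_insert_le _ _)
  have e1 := Finset.card_union_add_card_inter R R'
  have e2 := Finset.card_union_add_card_inter T T'
  have hI : T ∩ T' = ∅ := by
    by_contra hne
    have hI := hβ (T ∩ T') (Finset.nonempty_iff_ne_empty.2 hne) (fun h => by
      have : v ∈ T ∩ T' := h ▸ Finset.mem_univ v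
      exact hv (hTu' v (Finset.mem_inter.1 this).2 huv))
    have hI' : nbrs (fun w x => r x w) (T ∩ T') ⊆ R ∩ R' := by
      intro z hz
      obtain ⟨t, ht, hzt⟩ := mem_nbrs.1 hz
      obtain ⟨ht1, ht2⟩ := Finset.mem_inter.1 ht
      have hzu : z ≠ u := by
        rintro rfl
        exact hv ((hTu t ht1 hzt).symm.trans (hTu' t ht2 hzt))
      have := hT t ht1 z hzt
      have := hT' t ht2 z hzt
      rw [Finset.mem_inter]
      tauto
    have := Finset.card_le_card hI'
    omega
  rw [Finset.disjoint_iff_inter_eq_empty, Finset.disjoint_iff_inter_eq_empty]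
  refine ⟨?_, hI⟩
  rw [hI, Finset.card_empty] at e2
  exact Finset.card_eq_zero.1 (by omega)

open Classical in
/-- An element `u` outside `{a, a'}` without removable edges is the unique common neighbour of
`b` and `b'`. -/
theorem common_nbr_of_not_removablePair (hcard : Fintype.card α = Fintype.card β)
    (haa : a ≠ a') (hbb : b ≠ b')
    (hαs : ∀ Y : Finset α, Y.Nonempty → Y ≠ Finset.univ → Y.card < (nbrs r Y).card)
    (hβs : ∀ T : Finset β, T.Nonempty → T ≠ Finset.univ →
      T.card < (nbrs (fun w x => r x w) T).card)
    (hα : ∀ Y : Finset α, Y.Nonempty → (Y \ {a, a'}).card + 2 ≤ (nbrs r Y).card)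
    (hβ : ∀ T : Finset β, T.Nonempty →
      (T \ {b, b'}).card + 2 ≤ (nbrs (fun w x => r x w) T).card)
    {M : α → β} (hM : IsCoreMatching r a a' b b' M) (hua : u ≠ a) (hua' : u ≠ a')
    (hu : ∀ v, r u v → ¬ RemovablePair r a a' b b' u v) :
    r u b ∧ r u b' ∧ ∀ z, r z b → r z b' → z = u := by
  -- every edge at `u` that is not forced into core matchings comes with a block
  let Block (v : β) (R : Finset α) (T : Finset β) : Prop :=
    R.card = T.card ∧ u ∉ R ∧ v ∈ T ∧ (∀ t ∈ T, ∀ z, r z t → z ∈ R ∨ z = u) ∧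
      (∀ t ∈ T, r u t → t = v) ∧ ∃ x ∈ R, ∃ w ∉ T, r x w ∧
        ∀ g, IsCoreMatching r a a' b b' g → g u ≠ v → x ≠ a → x ≠ a' → g x ≠ w
  have hblock : ∀ v, r u v → (∃ g, IsCoreMatching r a a' b b' g ∧ g u ≠ v) →
      ∃ R T, Block v R T := by
    intro v huv hg
    have h := hu v huv
    rw [RemovablePair, not_and] at h
    have h := h hg
    push Not at h
    obtain ⟨x, w, hxw, hne, h1, h2⟩ := h
    obtain ⟨R, T, p1, p2, p3, p4, p5, p6, p7⟩ := exists_block hcard hαs hxw hne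
      (by push Not; exact h1)
    exact ⟨R, T, p1, p2, p3, p4, p5, x, p6, w, p7, hxw, h2⟩
  have hmeet : ∀ v R T, Block v R T → b ∈ T ∨ b' ∈ T := by
    rintro v R T ⟨p1, p2, p3, p4, p5, -⟩
    by_contra hcon
    push Not at hcon
    have h1 : T \ {b, b'} = T := by
      ext t
      simp only [Finset.mem_sdiff, Finset.mem_insert, Finset.mem_singleton]
      grind
    have h2 := hβ T ⟨v, p3⟩
    have h3 : nbrs (fun w x => r x w) T ⊆ insert u R := by
      intro z hz
      obtain ⟨t, ht, hzt⟩ := mem_nbrs.1 hz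
      have := p4 t ht z hzt
      rw [Finset.mem_insert]
      tauto
    have h4 := (Finset.card_le_card h3).trans (Finset.card_insert_le _ _)
    rw [h1] at h2
    omega
  have hdeg : 3 ≤ (nbrs r {u}).card := by
    have h1 : ({u} : Finset α) \ {a, a'} = {u} := by
      ext t
      simp only [Finset.mem_sdiff, Finset.mem_insert, Finset.mem_singleton]
      grind
    have := hα {u} (Finset.singleton_nonempty u)
    rw [h1, Finset.card_singleton] at this
    omega
  have huM : r u (M u) := hM.rel u hua hua'
  obtain ⟨v₁, hv₁, v₂, hv₂, h12⟩ := Finset.one_lt_card.1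
    (show 1 < ((nbrs r {u}).erase (M u)).card by
      rw [Finset.card_erase_of_mem (mem_nbrs.2 ⟨u, by simp, huM⟩)]; omega)
  have hr : ∀ v ∈ (nbrs r {u}).erase (M u), v ≠ M u ∧ r u v := by
    intro v hv
    obtain ⟨h1, h2⟩ := Finset.mem_erase.1 hv
    obtain ⟨x, hx, hxv⟩ := mem_nbrs.1 h2
    rw [Finset.mem_singleton] at hx
    exact ⟨h1, hx ▸ hxv⟩
  obtain ⟨hv₁M, hr₁⟩ := hr v₁ hv₁
  obtain ⟨hv₂M, hr₂⟩ := hr v₂ hv₂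
  obtain ⟨R₁, T₁, hB₁⟩ := hblock v₁ hr₁ ⟨M, hM, hv₁M.symm⟩
  obtain ⟨R₂, T₂, hB₂⟩ := hblock v₂ hr₂ ⟨M, hM, hv₂M.symm⟩
  have hdisj : ∀ {v v' v₀ R R' T T'}, Block v R T → Block v' R' T' → r u v → r u v₀ →
      v ≠ v' → v₀ ≠ v → v₀ ≠ v' → Disjoint R R' ∧ Disjoint T T' :=
    fun h h' k k₀ n n₀ n₀' => blocks_disjoint hβs k n k₀ n₀ n₀' h.1 h'.1 h.2.2.1
      h.2.2.2.1 h'.2.2.2.1 h.2.2.2.2.1 h'.2.2.2.2.1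
  obtain ⟨hR, hT⟩ := hdisj hB₁ hB₂ hr₁ huM h12 hv₁M.symm hv₂M.symm
  have hforced : ∀ g, IsCoreMatching r a a' b b' g → g u = M u := by
    by_contra hcon
    push Not at hcon
    obtain ⟨R₃, T₃, hB₃⟩ := hblock (M u) huM hcon
    obtain ⟨-, hT13⟩ := hdisj hB₁ hB₃ hr₁ hr₂ hv₁M h12.symm hv₂M
    obtain ⟨-, hT23⟩ := hdisj hB₂ hB₃ hr₂ hr₁ hv₂M h12 hv₁M
    have m1 := hmeet _ _ _ hB₁
    have m2 := hmeet _ _ _ hB₂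
    have m3 := hmeet _ _ _ hB₃
    rw [Finset.disjoint_left] at hT hT13 hT23
    rcases m1 with m1 | m1 <;> rcases m2 with m2 | m2 <;> rcases m3 with m3 | m3 <;>
      first | exact hT m1 m2 | exact hT13 m1 m3 | exact hT23 m2 m3
  obtain ⟨Y, haY, ha'Y, huY, hY, hYu⟩ := exists_tight_of_forced hM haa hbb hua hua' hforced
  clear hv₁ hv₂
  wlog hbT : b ∈ T₁ ∧ b' ∈ T₂ generalizing v₁ v₂ R₁ R₂ T₁ T₂
  · refine this v₂ v₁ h12.symm hv₂M hr₂ hv₁M hr₁ R₂ T₂ hB₂ R₁ T₁ hB₁ hR.symm hT.symm ?_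
    have m1 := hmeet _ _ _ hB₁
    have m2 := hmeet _ _ _ hB₂
    rw [Finset.disjoint_left] at hT
    rcases m1 with m1 | m1 <;> rcases m2 with m2 | m2
    · exact absurd m2 (hT m1)
    · exact absurd ⟨m1, m2⟩ hbT
    · exact ⟨m2, m1⟩
    · exact absurd m2 (hT m1)
  obtain ⟨hbT, hb'T⟩ := hbT
  rw [Finset.disjoint_left] at hR hT
  have hb'T₁ : b' ∉ T₁ := fun h => hT h hb'T
  have hbT₂ : b ∉ T₂ := fun h => hT hbT h
  obtain ⟨p1, p2, p3, p4, p5, x, hxR, w, hwT, hxw, hcov⟩ := hB₁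
  obtain ⟨q1, q2, q3, q4, q5, -⟩ := hB₂
  have hb'R : ∀ z, r z b' → z ∉ R₁ := by
    intro z hz hzR
    rcases q4 b' hb'T z hz with h | h
    · exact hR hzR h
    · exact p2 (h ▸ hzR)
  have hMuT : M u ∉ T₁ := fun h => hv₁M (p5 _ h huM).symm
  have hsub : ∀ D : Finset α, a ∉ D → a' ∉ D → u ∉ D → nbrs r D \ {b, b'} = D.image M →
      D.Nonempty → R₁ ⊆ D := fun D h1 h2 h3 h4 h5 =>
    block_subset_of_tight hcard hM hα hβ p1 p4 hbT hb'T₁ hMuT hb'R h1 h2 h3 h4 h5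
  have hYe : Y = ∅ := by
    by_contra hne
    have hRY := hsub Y haY ha'Y huY hY (Finset.nonempty_iff_ne_empty.2 hne)
    have hxa : x ≠ a := fun h => haY (h ▸ hRY hxR)
    have hxa' : x ≠ a' := fun h => ha'Y (h ▸ hRY hxR)
    have hwb : w ≠ b := fun h => hwT (h ▸ hbT)
    have hwb' : w ≠ b' := by rintro rfl; exact hb'R x hxw hxR
    obtain ⟨D, haD, ha'D, hxD, hD, hwD⟩ := exists_tight_of_not_covered hM haa hbb hxw hxa hxa'
      hwb hwb' (fun g hg => hcov g hg (by rw [hforced g hg]; exact hv₁M.symm) hxa hxa')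
    have hwY : w ∈ Y.image M := by
      rw [← hY, Finset.mem_sdiff, mem_nbrs]
      refine ⟨⟨x, hRY hxR, hxw⟩, ?_⟩
      simp [hwb, hwb']
    have hDY : (D ∩ Y).image M = D.image M ∩ Y.image M :=
      Finset.image_inter _ _ hM.injective
    have hDYne : (D ∩ Y).Nonempty := by
      rw [← Finset.image_nonempty (f := M), hDY]
      exact ⟨w, Finset.mem_inter.2 ⟨hwD, hwY⟩⟩
    have hDYaa : ∀ z ∈ D ∩ Y, z ≠ a ∧ z ≠ a' := fun z hz =>
      ⟨fun h => haD (h ▸ (Finset.mem_inter.1 hz).1), fun h => ha'D (h ▸ (Finset.mem_inter.1 hz).1)⟩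
    have htight : nbrs r (D ∩ Y) \ {b, b'} = (D ∩ Y).image M := by
      apply Finset.Subset.antisymm
      · rw [hDY, ← hD, ← hY]
        intro y hy
        simp only [Finset.mem_sdiff, Finset.mem_inter, mem_nbrs] at hy ⊢
        obtain ⟨⟨z, hz, hzy⟩, hyb⟩ := hy
        exact ⟨⟨⟨z, hz.1, hzy⟩, hyb⟩, ⟨z, hz.2, hzy⟩, hyb⟩
      · intro y hy
        have hy' := hy
        rw [hDY, ← hD] at hy'
        refine Finset.mem_sdiff.2 ⟨?_, (Finset.mem_sdiff.1 (Finset.mem_inter.1 hy').1).2⟩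
        obtain ⟨z, hz, rfl⟩ := Finset.mem_image.1 hy
        exact mem_nbrs.2 ⟨z, hz, hM.rel z (hDYaa z hz).1 (hDYaa z hz).2⟩
    have := hsub (D ∩ Y) (fun h => haD (Finset.mem_inter.1 h).1)
      (fun h => ha'D (Finset.mem_inter.1 h).1) (fun h => huY (Finset.mem_inter.1 h).2) htight hDYne
    exact hxD (Finset.mem_inter.1 (this hxR)).1
  have hYu' : ∀ w, r u w → w = M u ∨ w = b ∨ w = b' := by
    intro w hw
    simpa [hYe] using hYu w hw
  have e1 : v₁ = b := by
    rcases hYu' v₁ hr₁ with h | h | h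
    · exact absurd h hv₁M
    · exact h
    · exact absurd (h ▸ p3) hb'T₁
  have e2 : v₂ = b' := by
    rcases hYu' v₂ hr₂ with h | h | h
    · exact absurd h hv₂M
    · exact absurd (h ▸ q3) hbT₂
    · exact h
  refine ⟨e1 ▸ hr₁, e2 ▸ hr₂, fun z hz hz' => ?_⟩
  rcases p4 b hbT z hz with h | h
  · exact absurd h (hb'R z hz')
  · exact h

end Bipartite

lemma IsPerfectMatching.exists_mate {W : Type u} {G : SimpleGraph W} {M : Subgraph G}
    (hM : M.IsPerfectMatching) :
    ∃ μ : W → W, (∀ v, μ (μ v) = v) ∧ ∀ v w, M.Adj v w ↔ μ v = w := by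
  choose μ h1 h2 using fun v => hM.1 (hM.2 v)
  refine ⟨μ, fun v => (h2 _ _ (h1 v).symm).symm, fun v w => ⟨fun h => (h2 v w h).symm, ?_⟩⟩
  rintro rfl
  exact h1 v

lemma HasPM.exists_mate {G : SimpleGraph V} {S : Set V} (h : HasPM (G.induce S)) :
    ∃ μ : V → V, ∀ v ∈ S, μ v ∈ S ∧ G.Adj v (μ v) ∧ μ (μ v) = v := by
  classical
  obtain ⟨M, hM⟩ := h
  obtain ⟨μ, h1, h2⟩ := IsPerfectMatching.exists_mate hM
  refine ⟨fun v => if h : v ∈ S then μ ⟨v, h⟩ else v, fun v hv => ?_⟩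
  have hadj : (G.induce S).Adj ⟨v, hv⟩ (μ ⟨v, hv⟩) := M.adj_sub ((h2 _ _).2 rfl)
  simp only [hv, dif_pos, Subtype.coe_prop, Subtype.coe_eta, h1, true_and, and_true]
  exact hadj

lemma exists_isPerfectMatching {G : SimpleGraph V} {μ : V → V} (h1 : ∀ v, μ (μ v) = v)
    (h2 : ∀ v, G.Adj v (μ v)) :
    ∃ M : Subgraph G, M.IsPerfectMatching ∧ ∀ v, s(v, μ v) ∈ M.edgeSet := by
  let M : Subgraph G :=
    { verts := Set.univ
      Adj := fun v w => μ v = w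
      adj_sub := by rintro v w rfl; exact h2 v
      edge_vert := fun _ => Set.mem_univ _
      symm := ⟨by rintro v w rfl; exact h1 v⟩ }
  exact ⟨M, ⟨fun v _ => ⟨μ v, rfl, fun w hw => Eq.symm hw⟩, fun v => Set.mem_univ v⟩, fun v => rfl⟩

section Coloured

variable {c : V → Bool} {k l : Bool}

lemma colour_eq (hkl : k ≠ l) {v : V} (h : c v ≠ k) : c v = l := by
  revert h hkl; generalize c v = d; revert d k l; decide

lemma exists_involution [Fintype V] (hkl : k ≠ l)
    (hcard : Fintype.card {v // c v = k} = Fintype.card {v // c v = l})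
    {f : {v // c v = k} → {v // c v = l}} (hf : Function.Injective f) :
    ∃ μ : V → V, (∀ v, μ (μ v) = v) ∧ (∀ x : {v // c v = k}, μ x = f x) ∧
      ∀ v, c v = l → c (μ v) = k := by
  let F := Equiv.ofBijective f ((Fintype.bijective_iff_injective_and_card f).2 ⟨hf, hcard⟩)
  have hl : ∀ v, c v = l → c v ≠ k := fun v h h' => hkl (h'.symm.trans h)
  let μ : V → V := fun v =>
    if h : c v = k then (F ⟨v, h⟩).1 else (F.symm ⟨v, colour_eq hkl h⟩).1
  have h1 : ∀ v (h : c v = k), μ v = (F ⟨v, h⟩).1 := fun v h => by simp [μ, h]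
  have h2 : ∀ v (h : c v = l), μ v = (F.symm ⟨v, h⟩).1 := fun v h => by
    simp only [μ, hl v h, dif_neg, not_false_eq_true]
  refine ⟨μ, fun v => ?_, fun x => h1 x x.2, fun v h => ?_⟩
  · by_cases h : c v = k
    · rw [h1 v h, h2 _ (F ⟨v, h⟩).2]; simp
    · rw [h2 v (colour_eq hkl h), h1 _ (F.symm _).2]; simp
  · rw [h2 v h]; exact (F.symm _).2

/-- Strict Hall condition for a matching covered bipartite graph. -/
lemma card_lt_card_nbrs [Fintype V] {H : SimpleGraph V} (hH : MatchingCovered H) (hkl : k ≠ l)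
    (hcol : ∀ p q, H.Adj p q → c p ≠ c q) (Y : Finset {v // c v = k}) (hne : Y.Nonempty)
    (hun : Y ≠ Finset.univ) :
    Y.card < (nbrs (fun (x : {v // c v = k}) (w : {v // c v = l}) => H.Adj x w) Y).card := by
  classical
  obtain ⟨hconn, -, hcov⟩ := hH
  obtain ⟨y, hy⟩ := hne
  obtain ⟨z, hz⟩ : ∃ z, z ∉ Y := by
    by_contra h
    push Not at h
    exact hun (Finset.eq_univ_iff_forall.2 h)
  obtain ⟨p⟩ := hconn.preconnected y.1 z.1
  obtain ⟨d, -, hd1, hd2⟩ := p.exists_boundary_dart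
    {q | ∃ x ∈ Y, q = x.1 ∨ H.Adj x.1 q} ⟨y, hy, Or.inl rfl⟩ (by
      rintro ⟨x, hx, h | h⟩
      · exact hz (Subtype.ext h ▸ hx)
      · exact hcol _ _ h (x.2.trans z.2.symm))
  obtain ⟨x, hx, h⟩ := hd1
  have hxd : H.Adj x.1 d.fst := by
    rcases h with h | h
    · exact absurd ⟨x, hx, Or.inr (h ▸ d.adj)⟩ hd2
    · exact h
  have hfst : c d.fst = l := colour_eq hkl (fun h => hcol _ _ hxd (x.2.trans h.symm))
  have hsnd : d.snd ∉ Subtype.val '' (Y : Set {v // c v = k}) := by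
    rintro ⟨x', hx', h⟩
    exact hd2 ⟨x', hx', Or.inl h.symm⟩
  obtain ⟨M, hM, hMe⟩ := hcov s(d.fst, d.snd) d.adj
  obtain ⟨μ, h1, h2⟩ := IsPerfectMatching.exists_mate hM
  have hμ : ∀ v, H.Adj v (μ v) := fun v => M.adj_sub ((h2 _ _).2 rfl)
  have hμl : ∀ x : {v // c v = k}, c (μ x) = l := fun x =>
    colour_eq hkl (fun h => hcol _ _ (hμ x) (x.2.trans h.symm))
  let g : {v // c v = k} → {v // c v = l} := fun x => ⟨μ x, hμl x⟩
  have hg : Function.Injective g := fun x x' h => by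
    have h' : μ x.1 = μ x'.1 := congrArg Subtype.val h
    exact Subtype.ext (by rw [← h1 x.1, h', h1])
  have hlt : Y.image g ⊂ nbrs (fun (x : {v // c v = k}) (w : {v // c v = l}) => H.Adj x w) Y := by
    rw [Finset.ssubset_iff_of_subset]
    · refine ⟨⟨d.fst, hfst⟩, mem_nbrs.2 ⟨x, hx, hxd⟩, fun hmem => hsnd ?_⟩
      obtain ⟨x', hx', h'⟩ := Finset.mem_image.1 hmem
      have h3 : μ x'.1 = d.fst := congrArg Subtype.val h'
      have h4 : μ d.fst = d.snd := (h2 _ _).1 hMe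
      exact ⟨x', hx', by rw [← h4, ← h3, h1]⟩
    · intro w hw
      obtain ⟨x', hx', rfl⟩ := Finset.mem_image.1 hw
      exact mem_nbrs.2 ⟨x', hx', hμ x'⟩
  have := Finset.card_lt_card hlt
  rwa [Finset.card_image_of_injective _ hg] at this

lemma card_colour_le [Fintype V] {H : SimpleGraph V} (hH : MatchingCovered H) (hkl : k ≠ l)
    (hcol : ∀ p q, H.Adj p q → c p ≠ c q) :
    Fintype.card {v // c v = k} ≤ Fintype.card {v // c v = l} := by
  obtain ⟨-, ⟨e, he⟩, hcov⟩ := hH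
  obtain ⟨M, hM, -⟩ := hcov e he
  obtain ⟨μ, h1, h2⟩ := IsPerfectMatching.exists_mate hM
  have hμ : ∀ v, H.Adj v (μ v) := fun v => M.adj_sub ((h2 _ _).2 rfl)
  refine Fintype.card_le_of_injective (fun x : {v // c v = k} => (⟨μ x,
    colour_eq hkl (fun h => hcol _ _ (hμ x) (x.2.trans h.symm))⟩ : {v // c v = l})) ?_
  intro x x' h
  have h' : μ x.1 = μ x'.1 := congrArg Subtype.val h
  exact Subtype.ext (by rw [← h1 x.1, h', h1])

variable [Fintype V] {G : SimpleGraph V}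

/-- Deleting two vertices of one colour class forces an edge inside the other class. -/
lemma exists_adj_same_colour
    (hbic : ∀ x y : V, x ≠ y → HasPM (G.induce ({x, y} : Set V)ᶜ)) (hkl : k ≠ l)
    (hcard : Fintype.card {v // c v = k} = Fintype.card {v // c v = l})
    (h2 : 2 ≤ Fintype.card {v // c v = k}) : ∃ p q, G.Adj p q ∧ c p = l ∧ c q = l := by
  classical
  by_contra hcon
  push Not at hcon
  obtain ⟨x, y, hxy⟩ := Fintype.one_lt_card_iff.1 (show 1 < Fintype.card {v // c v = k} by omega)
  obtain ⟨μ, hμ⟩ := HasPM.exists_mate (hbic x y (fun h => hxy (Subtype.ext h)))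
  have hS : ∀ w : {v // c v = l}, w.1 ∈ ({x.1, y.1} : Set V)ᶜ := by
    rintro ⟨w, hw⟩ (h | h)
    · exact hkl (x.2.symm.trans (h ▸ hw))
    · exact hkl (y.2.symm.trans (h ▸ hw))
  let g : {v // c v = l} → {v // c v = k} := fun w =>
    ⟨μ w, colour_eq hkl.symm (hcon _ _ (hμ w (hS w)).2.1 w.2)⟩
  have hg : Function.Injective g := fun w w' h => by
    have h' : μ w.1 = μ w'.1 := congrArg Subtype.val h
    exact Subtype.ext (by rw [← (hμ w (hS w)).2.2, h', (hμ w' (hS w')).2.2])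
  obtain ⟨w, hw⟩ := ((Fintype.bijective_iff_injective_and_card g).2 ⟨hg, hcard.symm⟩).2 x
  have := (hμ w (hS w)).1
  exact this (Or.inl (congrArg Subtype.val hw))

variable {a a' b b' : V}

open Classical in
lemma card_sdiff_add_two_le_card_nbrs
    (hbic : ∀ x y : V, x ≠ y → HasPM (G.induce ({x, y} : Set V)ᶜ)) (hkl : k ≠ l)
    (hcol : ∀ p q, G.Adj p q → c p ≠ c q ∨ s(p, q) = s(a, a') ∨ s(p, q) = s(b, b'))
    (ha : c a = k) (ha' : c a' = k) (hb : c b = l) (hb' : c b' = l) (Y : Finset {v // c v = k})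
    (hY : 2 ≤ (nbrs (fun (x : {v // c v = k}) (w : {v // c v = l}) => G.Adj x w) Y).card) :
    (Y \ {⟨a, ha⟩, ⟨a', ha'⟩}).card + 2 ≤
      (nbrs (fun (x : {v // c v = k}) (w : {v // c v = l}) => G.Adj x w) Y).card := by
  set N := nbrs (fun (x : {v // c v = k}) (w : {v // c v = l}) => G.Adj x w) Y
  obtain ⟨p, hp, q, hq, hpq⟩ := Finset.one_lt_card.1 (show 1 < N.card by omega)
  obtain ⟨μ, hμ⟩ := HasPM.exists_mate (hbic p q (fun h => hpq (Subtype.ext h)))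
  have hS : ∀ w : {v // c v = k}, w.1 ∈ ({p.1, q.1} : Set V)ᶜ := by
    rintro ⟨w, hw⟩ (h | h)
    · exact hkl ((h ▸ hw : c p.1 = k).symm.trans p.2)
    · exact hkl ((h ▸ hw : c q.1 = k).symm.trans q.2)
  have hl : ∀ w ∈ Y \ {⟨a, ha⟩, ⟨a', ha'⟩}, c (μ w) = l := by
    intro w hw
    have hw' : w.1 ≠ a ∧ w.1 ≠ a' := by
      simp only [Finset.mem_sdiff, Finset.mem_insert, Finset.mem_singleton, Subtype.ext_iff] at hw
      tauto
    refine colour_eq hkl (fun h => ?_)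
    have := w.2
    rcases hcol _ _ (hμ w (hS w)).2.1 with h' | h' | h'
    · exact h' (w.2.trans h.symm)
    · rw [Sym2.eq_iff] at h'
      tauto
    · rw [Sym2.eq_iff] at h'
      grind
  have hsub : (Y \ {⟨a, ha⟩, ⟨a', ha'⟩}).card ≤ ((N.erase p).erase q).card := by
    rw [← Finset.card_attach]
    refine Finset.card_le_card_of_injOn (fun w => ⟨μ w.1, hl w.1 w.2⟩) ?_ ?_
    · intro w _
      have h := hμ w.1 (hS w.1)
      have h1 : μ w.1 ≠ p.1 := fun e => h.1 (Or.inl e)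
      have h2 : μ w.1 ≠ q.1 := fun e => h.1 (Or.inr e)
      simp only [Finset.coe_erase, Set.mem_sdiff, Finset.mem_coe, Set.mem_singleton_iff,
        Subtype.ext_iff]
      exact ⟨⟨mem_nbrs.2 ⟨w.1, (Finset.mem_sdiff.1 w.2).1, h.2.1⟩, h1⟩, h2⟩
    · intro w _ w' _ h
      have h' : μ w.1 = μ w'.1 := congrArg Subtype.val h
      exact Subtype.ext (Subtype.ext (by rw [← (hμ _ (hS w.1)).2.2, h', (hμ _ (hS w'.1)).2.2]))
  rw [Finset.card_erase_of_mem (Finset.mem_erase.2 ⟨hpq.symm, hq⟩), Finset.card_erase_of_mem hp]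
    at hsub
  omega

open Classical in
lemma exists_isCoreMatching
    (hbic : ∀ x y : V, x ≠ y → HasPM (G.induce ({x, y} : Set V)ᶜ)) (hkl : k ≠ l)
    (hcol : ∀ p q, G.Adj p q → c p ≠ c q ∨ s(p, q) = s(a, a') ∨ s(p, q) = s(b, b'))
    (hcard : Fintype.card {v // c v = k} = Fintype.card {v // c v = l})
    (haa : a ≠ a') (hbb : b ≠ b')
    (ha : c a = k) (ha' : c a' = k) (hb : c b = l) (hb' : c b' = l) :
    ∃ M, IsCoreMatching (fun (x : {v // c v = k}) (w : {v // c v = l}) => G.Adj x w)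
      ⟨a, ha⟩ ⟨a', ha'⟩ ⟨b, hb⟩ ⟨b', hb'⟩ M := by
  obtain ⟨μ, hμ⟩ := HasPM.exists_mate (hbic a a' haa)
  have hS : ∀ w, w ≠ a → w ≠ a' → w ∈ ({a, a'} : Set V)ᶜ := by
    rintro w h h' (e | e) <;> contradiction
  have hl : ∀ w, c w = k → w ≠ a → w ≠ a' → c (μ w) = l := by
    intro w hw h h'
    refine colour_eq hkl (fun e => ?_)
    rcases hcol _ _ (hμ w (hS w h h')).2.1 with h1 | h1 | h1
    · exact h1 (hw.trans e.symm)
    · rw [Sym2.eq_iff] at h1; tauto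
    · rw [Sym2.eq_iff] at h1; grind
  set P : Finset {v // c v = k} := {⟨a, ha⟩, ⟨a', ha'⟩}ᶜ with hP
  have hPm : ∀ x : {v // c v = k}, x ∈ P ↔ x.1 ≠ a ∧ x.1 ≠ a' := fun x => by
    simp [hP, Subtype.ext_iff]
  let g₀ : {v // c v = k} → {v // c v = l} := fun x =>
    if h : x.1 = a ∨ x.1 = a' then ⟨b, hb⟩ else ⟨μ x, hl x x.2 (by tauto) (by tauto)⟩
  have hg₀ : ∀ x ∈ P, (g₀ x).1 = μ x := by
    intro x hx
    rw [hPm] at hx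
    simp [g₀, hx]
  have hinj : Set.InjOn g₀ P := by
    intro x hx y hy h
    have h' : μ x = μ y := by rw [← hg₀ x hx, ← hg₀ y hy, h]
    have hx' := (hPm x).1 hx
    have hy' := (hPm y).1 hy
    exact Subtype.ext (by
      rw [← (hμ _ (hS x hx'.1 hx'.2)).2.2, h', (hμ _ (hS y hy'.1 hy'.2)).2.2])
  have hcompl : (P.image g₀)ᶜ ⊆ {⟨b, hb⟩, ⟨b', hb'⟩} := by
    intro w hw
    have hwa : w.1 ≠ a := fun h => hkl (ha.symm.trans (h ▸ w.2))
    have hwa' : w.1 ≠ a' := fun h => hkl (ha'.symm.trans (h ▸ w.2))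
    obtain ⟨h1, h2, h3⟩ := hμ w (hS _ hwa hwa')
    have h1' : μ w ≠ a ∧ μ w ≠ a' := by
      constructor <;> intro h <;> exact h1 (by simp [h])
    have hcμ : c (μ w) = l := by
      refine colour_eq hkl (fun h => Finset.mem_compl.1 hw ?_)
      have hmem : (⟨μ w, h⟩ : {v // c v = k}) ∈ P := (hPm _).2 h1'
      exact Finset.mem_image.2 ⟨_, hmem, Subtype.ext (by rw [hg₀ _ hmem]; exact h3)⟩
    simp only [Finset.mem_insert, Finset.mem_singleton, Subtype.ext_iff]
    rcases hcol _ _ h2 with h | h | h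
    · exact absurd (w.2.trans hcμ.symm) h
    · rw [Sym2.eq_iff] at h; tauto
    · rw [Sym2.eq_iff] at h; tauto
  have hcompl' : (P.image g₀)ᶜ = {⟨b, hb⟩, ⟨b', hb'⟩} := by
    refine Finset.eq_of_subset_of_card_le hcompl ?_
    have e1 : (P.image g₀).card = P.card := Finset.card_image_of_injOn hinj
    have e2 : ({⟨a, ha⟩, ⟨a', ha'⟩} : Finset {v // c v = k}).card = 2 :=
      Finset.card_pair (fun h => haa (congrArg Subtype.val h))
    have e3 : ({⟨b, hb⟩, ⟨b', hb'⟩} : Finset {v // c v = l}).card ≤ 2 := Finset.card_le_two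
    have e4 := Finset.card_le_univ ({⟨a, ha⟩, ⟨a', ha'⟩} : Finset {v // c v = k})
    rw [Finset.card_compl, e1, hP, Finset.card_compl, e2, ← hcard]
    omega
  have hnot : ∀ x ∈ P, g₀ x ≠ ⟨b, hb⟩ ∧ g₀ x ≠ ⟨b', hb'⟩ := by
    intro x hx
    have h1 : g₀ x ∉ (P.image g₀)ᶜ := by
      rw [Finset.mem_compl, not_not]
      exact Finset.mem_image_of_mem _ hx
    rw [hcompl'] at h1
    simpa using h1
  refine ⟨fun x => if x.1 = a then ⟨b, hb⟩ else if x.1 = a' then ⟨b', hb'⟩ else g₀ x, ?_,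
    by simp, by simp [haa.symm], fun x h1 h2 => ?_⟩
  · intro x y h
    have hbb' : (⟨b, hb⟩ : {v // c v = l}) ≠ ⟨b', hb'⟩ := fun h => hbb (congrArg Subtype.val h)
    have hx := hnot x
    have hy := hnot y
    have hxy := @hinj x
    rw [hPm] at hx hy
    rw [Subtype.ext_iff]
    simp only at h
    simp only [Finset.mem_coe, hPm] at hxy
    split_ifs at h <;> grind
  · have h1' : x.1 ≠ a := fun h => h1 (Subtype.ext h)
    have h2' : x.1 ≠ a' := fun h => h2 (Subtype.ext h)
    simp only [h1', h2', if_false]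
    rw [hg₀ x ((hPm x).2 ⟨h1', h2'⟩)]
    exact (hμ _ (hS _ h1' h2')).2.1

end Coloured

section Coloured

variable {c : V → Bool} {k l : Bool}

lemma exists_isPerfectMatching_of_injective [Fintype V] {H : SimpleGraph V} (hkl : k ≠ l)
    (hcard : Fintype.card {v // c v = k} = Fintype.card {v // c v = l})
    {f : {v // c v = k} → {v // c v = l}} (hf : Function.Injective f)
    (hadj : ∀ z : {v // c v = k}, H.Adj z (f z)) :
    ∃ M : Subgraph H, M.IsPerfectMatching ∧
      ∀ z : {v // c v = k}, s((z : V), (f z : V)) ∈ M.edgeSet := by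
  obtain ⟨μ, h1, h2, h3⟩ := exists_involution hkl hcard hf
  obtain ⟨M, hM, hMe⟩ := exists_isPerfectMatching (G := H) h1 (by
    intro v
    by_cases hv : c v = k
    · rw [h2 ⟨v, hv⟩]; exact hadj ⟨v, hv⟩
    · have h := hadj ⟨μ v, h3 v (colour_eq hkl hv)⟩
      rw [← h2, h1] at h
      exact h.symm)
  exact ⟨M, hM, fun z => h2 z ▸ hMe z⟩

lemma exists_isPerfectMatching_of_isCoreMatching [Fintype V] {H : SimpleGraph V} (hkl : k ≠ l)
    (hcard : Fintype.card {v // c v = k} = Fintype.card {v // c v = l})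
    {a a' : {v // c v = k}} {b b' : {v // c v = l}} (haa : H.Adj a a') (hbb : H.Adj b b')
    {g : {v // c v = k} → {v // c v = l}}
    (hg : IsCoreMatching (fun (x : {v // c v = k}) (w : {v // c v = l}) => H.Adj x w)
      a a' b b' g) :
    ∃ M : Subgraph H, M.IsPerfectMatching ∧ s((a : V), (a' : V)) ∈ M.edgeSet ∧
      s((b : V), (b' : V)) ∈ M.edgeSet ∧
      ∀ z : {v // c v = k}, z ≠ a → z ≠ a' → s((z : V), (g z : V)) ∈ M.edgeSet := by
  classical
  obtain ⟨μ, h1, h2, h3⟩ := exists_involution hkl hcard hg.injective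
  have ea : μ a = b := by rw [h2, hg.map_left]
  have ea' : μ a' = b' := by rw [h2, hg.map_right]
  have eb : μ b = a := by rw [← ea, h1]
  have eb' : μ b' = a' := by rw [← ea', h1]
  have hne : ∀ (x : {v // c v = k}) (w : {v // c v = l}), x.1 ≠ w.1 := fun x w h =>
    hkl (x.2.symm.trans (h ▸ w.2))
  have haa' := haa.ne
  have hbb' := hbb.ne
  have n1 := hne a b
  have n2 := hne a b'
  have n3 := hne a' b
  have n4 := hne a' b'
  let ν : V → V := fun x =>
    if x = a then a' else if x = a' then a else if x = b then b' else if x = b' then b else μ x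
  have va : ν a = a' := if_pos rfl
  have vb : ν b = b' := by simp [ν, n1.symm, n3.symm]
  have hν : ∀ x : V, x ≠ a → x ≠ a' → x ≠ b → x ≠ b' → ν x = μ x := fun x e1 e2 e3 e4 => by
    simp [ν, e1, e2, e3, e4]
  have hνν : ∀ x, ν (ν x) = x := by
    intro x
    have := h1 x
    simp only [ν]
    grind
  have hk : ∀ x : {v // c v = k}, x ≠ a → x ≠ a' → ν x = g x := fun x e1 e2 => by
    rw [hν x (fun h => e1 (Subtype.ext h)) (fun h => e2 (Subtype.ext h)) (hne x b) (hne x b'), h2]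
  obtain ⟨M, hM, hMe⟩ := exists_isPerfectMatching (G := H) hνν (by
    intro x
    by_cases xa : x = a
    · rw [xa, va]; exact haa
    by_cases xa' : x = a'
    · rw [xa', ← va, hνν, va]; exact haa.symm
    by_cases xb : x = b
    · rw [xb, vb]; exact hbb
    by_cases xb' : x = b'
    · rw [xb', ← vb, hνν, vb]; exact hbb.symm
    rw [hν x xa xa' xb xb']
    by_cases hx : c x = k
    · rw [h2 ⟨x, hx⟩]
      exact hg.rel ⟨x, hx⟩ (fun h => xa (congrArg Subtype.val h))
        (fun h => xa' (congrArg Subtype.val h))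
    · have h := hg.rel ⟨μ x, h3 x (colour_eq hkl hx)⟩
        (fun h => xb (by rw [← ea, ← h, h1])) (fun h => xb' (by rw [← ea', ← h, h1]))
      rw [← h2, h1] at h
      exact h.symm)
  exact ⟨M, hM, va ▸ hMe a, vb ▸ hMe b, fun z e1 e2 => hk z e1 e2 ▸ hMe z⟩

lemma connected_deleteEdges {G : SimpleGraph V} (h3 : ThreeConnected G) {u v v' : V}
    (huv' : G.Adj u v') (hv' : v' ≠ v) : (G.deleteEdges {s(u, v)}).Connected := by
  have hc := h3.2 {u} (by rw [Set.ncard_singleton]; norm_num)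
  have hmem : v' ∈ ({u} : Set V)ᶜ := huv'.ne'
  let φ : G.induce ({u} : Set V)ᶜ →g G.deleteEdges {s(u, v)} :=
    { toFun := Subtype.val
      map_rel' := by
        rintro ⟨p, hp⟩ ⟨q, hq⟩ h
        rw [deleteEdges_adj]
        refine ⟨h, fun e => ?_⟩
        rw [Set.mem_singleton_iff, Sym2.eq_iff] at e
        rcases e with e | e
        · exact hp e.1
        · exact hq e.2 }
  have hreach : ∀ p, (G.deleteEdges {s(u, v)}).Reachable v' p := by
    intro p
    by_cases hp : p = u
    · subst hp
      refine Adj.reachable ?_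
      rw [deleteEdges_adj]
      refine ⟨huv'.symm, fun e => ?_⟩
      rw [Set.mem_singleton_iff, Sym2.eq_iff] at e
      rcases e with e | e
      · exact hmem e.1
      · exact hv' e.1
    · exact (hc.preconnected ⟨v', hmem⟩ ⟨p, hp⟩).map φ
  exact (connected_iff _).2 ⟨fun p q => (hreach p).symm.trans (hreach q), ⟨u⟩⟩

variable [Fintype V] {G : SimpleGraph V}

lemma removable_of_removablePair (h3 : ThreeConnected G) (hkl : k ≠ l)
    (hcard : Fintype.card {v // c v = k} = Fintype.card {v // c v = l})
    {a a' u : {v // c v = k}} {b b' v v' : {v // c v = l}}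
    (hcol : ∀ p q, G.Adj p q → c p ≠ c q ∨ s(p, q) = s(a.1, a'.1) ∨ s(p, q) = s(b.1, b'.1))
    (haa : G.Adj a a') (hbb : G.Adj b b') (hua : u ≠ a) (hua' : u ≠ a') (huv : G.Adj u v)
    (huv' : G.Adj u v') (hv' : v' ≠ v)
    (h : RemovablePair (fun (x : {v // c v = k}) (w : {v // c v = l}) => G.Adj x w)
      a a' b b' u v) : Removable G s(u.1, v.1) := by
  set H := G.deleteEdges {s(u.1, v.1)} with hH
  have hne : ∀ (x : {v // c v = k}) (w : {v // c v = l}), x.1 ≠ w.1 := fun x w h =>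
    hkl (x.2.symm.trans (h ▸ w.2))
  have hHadj : ∀ (x : {v // c v = k}) (w : {v // c v = l}), G.Adj x w → (x = u → w ≠ v) →
      H.Adj x w := by
    intro x w hxw hn
    rw [hH, deleteEdges_adj]
    refine ⟨hxw, fun e => ?_⟩
    rw [Set.mem_singleton_iff, Sym2.eq_iff] at e
    rcases e with e | e
    · exact hn (Subtype.ext e.1) (Subtype.ext e.2)
    · exact hne x v e.1
  have hHa : H.Adj a a' := by
    rw [hH, deleteEdges_adj]
    refine ⟨haa, fun e => ?_⟩
    rw [Set.mem_singleton_iff, Sym2.eq_iff] at e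
    rcases e with e | e
    · exact hne a' v e.2
    · exact hne a v e.1
  have hHb : H.Adj b b' := by
    rw [hH, deleteEdges_adj]
    refine ⟨hbb, fun e => ?_⟩
    rw [Set.mem_singleton_iff, Sym2.eq_iff] at e
    rcases e with e | e
    · exact hne u b e.1.symm
    · exact hne u b' e.2.symm
  have hcore : ∀ g, IsCoreMatching
      (fun (x : {v // c v = k}) (w : {v // c v = l}) => G.Adj x w) a a' b b' g → g u ≠ v →
      IsCoreMatching (fun (x : {v // c v = k}) (w : {v // c v = l}) => H.Adj x w) a a' b b' g :=
    fun g hg hgu => ⟨hg.injective, hg.map_left, hg.map_right,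
      fun x e1 e2 => hHadj _ _ (hg.rel x e1 e2) (fun hx => hx ▸ hgu)⟩
  obtain ⟨⟨g, hg, hgu⟩, hcov⟩ := h
  have hedge : ∀ (x : {v // c v = k}) (w : {v // c v = l}), H.Adj x w →
      ∃ M : Subgraph H, M.IsPerfectMatching ∧ s(x.1, w.1) ∈ M.edgeSet := by
    intro x w hxw
    rw [hH, deleteEdges_adj] at hxw
    rcases hcov x w hxw.1 (by rintro rfl rfl; exact hxw.2 rfl) with
      ⟨f, hf, hfr, hfu, hfx⟩ | ⟨g, hg, hgu, e1, e2, hgx⟩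
    · obtain ⟨M, hM, hMe⟩ := exists_isPerfectMatching_of_injective (H := H) hkl hcard hf
        (fun z => hHadj z _ (hfr z) (fun hz => hz ▸ hfu))
      exact ⟨M, hM, hfx ▸ hMe x⟩
    · obtain ⟨M, hM, -, -, hMe⟩ :=
        exists_isPerfectMatching_of_isCoreMatching hkl hcard hHa hHb (hcore g hg hgu)
      exact ⟨M, hM, hgx ▸ hMe x e1 e2⟩
  refine ⟨huv, connected_deleteEdges h3 huv' (fun e => hv' (Subtype.ext e)), ⟨s(a.1, a'.1), hHa⟩, ?_⟩
  intro e
  induction e with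
  | _ p q =>
  intro (hpq : H.Adj p q)
  by_cases hpqc : c p = c q
  · obtain ⟨M, hM, hMa, hMb, -⟩ :=
      exists_isPerfectMatching_of_isCoreMatching hkl hcard hHa hHb (hcore g hg hgu)
    rcases hcol p q (deleteEdges_le _ hpq) with e | e | e
    · exact absurd hpqc e
    · exact ⟨M, hM, e ▸ hMa⟩
    · exact ⟨M, hM, e ▸ hMb⟩
  · by_cases hp : c p = k
    · exact hedge ⟨p, hp⟩ ⟨q, colour_eq hkl (fun e => hpqc (hp.trans e.symm))⟩ hpq
    · have hpl := colour_eq hkl hp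
      rw [show s(p, q) = s(q, p) from Sym2.eq_swap]
      exact hedge ⟨q, colour_eq hkl.symm (fun e => hpqc (hpl.trans e.symm))⟩ ⟨p, hpl⟩ hpq.symm

lemma two_le_card_nbrs {H : SimpleGraph V} (hH : MatchingCovered H) (hkl : k ≠ l)
    (hcol : ∀ p q, H.Adj p q → c p ≠ c q) (h2 : 2 ≤ Fintype.card {v // c v = k})
    (Y : Finset {v // c v = k}) (hY : Y.Nonempty) :
    2 ≤ (nbrs (fun (x : {v // c v = k}) (w : {v // c v = l}) => H.Adj x w) Y).card := by
  obtain ⟨y, hy⟩ := hY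
  have h := card_lt_card_nbrs hH hkl hcol {y} (Finset.singleton_nonempty y) (by
    intro h
    rw [← Finset.card_univ, ← h, Finset.card_singleton] at h2
    omega)
  rw [Finset.card_singleton] at h
  refine h.trans_le (Finset.card_le_card fun w hw => ?_)
  obtain ⟨x, hx, hxw⟩ := mem_nbrs.1 hw
  rw [Finset.mem_singleton] at hx
  exact mem_nbrs.2 ⟨y, hy, hx ▸ hxw⟩

/-- In each colour class, at most one vertex off the two extra edges is incident with no removable
edge. -/
lemma eq_of_not_removable (hG : IsBrick G) (hkl : k ≠ l)
    (hcard : Fintype.card {v // c v = k} = Fintype.card {v // c v = l})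
    (h2 : 2 ≤ Fintype.card {v // c v = k}) {a a' b b' : V}
    (hH : MatchingCovered (G.deleteEdges {s(a, a'), s(b, b')}))
    (hcolH : ∀ p q, (G.deleteEdges {s(a, a'), s(b, b')}).Adj p q → c p ≠ c q)
    (haa : G.Adj a a') (hbb : G.Adj b b')
    (ha : c a = k) (ha' : c a' = k) (hb : c b = l) (hb' : c b' = l) {x y : V}
    (hx : c x = k) (hy : c y = k) (hxa : x ≠ a) (hxa' : x ≠ a') (hya : y ≠ a) (hya' : y ≠ a')
    (hxr : ∀ v, ¬ Removable G s(x, v)) (hyr : ∀ v, ¬ Removable G s(y, v)) : x = y := by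
  set H := G.deleteEdges {s(a, a'), s(b, b')} with hHdef
  have hcol : ∀ p q, G.Adj p q → c p ≠ c q ∨ s(p, q) = s(a, a') ∨ s(p, q) = s(b, b') := by
    intro p q hpq
    by_cases h : s(p, q) ∈ ({s(a, a'), s(b, b')} : Set (Sym2 V))
    · exact Or.inr h
    · exact Or.inl (hcolH p q ((deleteEdges_adj).2 ⟨hpq, h⟩))
  have hiff : ∀ p q, c p ≠ c q → (H.Adj p q ↔ G.Adj p q) := by
    intro p q hpq
    rw [hHdef, deleteEdges_adj, and_iff_left]
    rw [Set.mem_insert_iff, Set.mem_singleton_iff, Sym2.eq_iff, Sym2.eq_iff]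
    grind
  have hr : (fun (x : {v // c v = k}) (w : {v // c v = l}) => H.Adj x w) =
      fun (x : {v // c v = k}) (w : {v // c v = l}) => G.Adj x w := by
    funext x w
    exact propext (hiff x w (by rw [x.2, w.2]; exact hkl))
  have hr' : (fun (w : {v // c v = l}) (x : {v // c v = k}) => H.Adj w x) =
      fun (w : {v // c v = l}) (x : {v // c v = k}) => G.Adj x w := by
    funext w x
    rw [G.adj_comm]
    exact propext (hiff w x (by rw [x.2, w.2]; exact hkl.symm))
  have hr'' : (fun (w : {v // c v = l}) (x : {v // c v = k}) => G.Adj w x) =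
      fun (w : {v // c v = l}) (x : {v // c v = k}) => G.Adj x w := by
    funext w x
    rw [G.adj_comm]
  have hα₂ := two_le_card_nbrs hH hkl hcolH h2
  have hβ₂ := two_le_card_nbrs hH hkl.symm hcolH (hcard ▸ h2)
  have hαs := card_lt_card_nbrs hH hkl hcolH
  have hβs := card_lt_card_nbrs hH hkl.symm hcolH
  have hα := card_sdiff_add_two_le_card_nbrs hG.2 hkl hcol ha ha' hb hb'
  have hβ := card_sdiff_add_two_le_card_nbrs hG.2 hkl.symm
    (fun p q h => (hcol p q h).imp_right Or.symm) hb hb' ha ha'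
  rw [hr] at hα₂ hαs
  rw [hr'] at hβ₂ hβs
  rw [hr''] at hβ
  obtain ⟨M, hM⟩ := exists_isCoreMatching hG.2 hkl hcol hcard haa.ne hbb.ne ha ha' hb hb'
  have key : ∀ u : {v // c v = k}, u.1 ≠ a → u.1 ≠ a' → (∀ v, ¬ Removable G s(u.1, v)) →
      G.Adj u b ∧ G.Adj u b' ∧ ∀ z : {v // c v = k}, G.Adj z b → G.Adj z b' → z = u := by
    intro u hua hua' hur
    have hua₁ : u ≠ ⟨a, ha⟩ := fun h => hua (congrArg Subtype.val h)
    have hua₂ : u ≠ ⟨a', ha'⟩ := fun h => hua' (congrArg Subtype.val h)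
    refine common_nbr_of_not_removablePair hcard (fun h => haa.ne (congrArg Subtype.val h))
      (fun h => hbb.ne (congrArg Subtype.val h)) hαs hβs (fun Y hY => by convert hα Y (hα₂ Y hY))
      (fun T hT => by convert hβ T (hβ₂ T hT)) hM hua₁ hua₂ ?_
    intro v huv hrp
    obtain ⟨v', hv', hne⟩ := Finset.exists_mem_ne (Nat.lt_of_succ_le (hα₂ {u} (by simp))) v
    obtain ⟨z, hz, hzv⟩ := mem_nbrs.1 hv'
    rw [Finset.mem_singleton] at hz
    subst hz
    exact hur v.1 (removable_of_removablePair hG.1 hkl hcard hcol haa hbb hua₁ hua₂ huv hzv hne hrp)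
  obtain ⟨h1, h2, -⟩ := key ⟨x, hx⟩ hxa hxa' hxr
  obtain ⟨-, -, h3⟩ := key ⟨y, hy⟩ hya hya' hyr
  exact congrArg Subtype.val (h3 ⟨x, hx⟩ h1 h2)

/-- All but at most six vertices are incident with a removable edge. -/
lemma card_le_two_mul_card_removable (hG : IsBrick G) (hkl : k ≠ l)
    (hcard : Fintype.card {v // c v = k} = Fintype.card {v // c v = l})
    (h2 : 2 ≤ Fintype.card {v // c v = k}) {a a' b b' : V}
    (hH : MatchingCovered (G.deleteEdges {s(a, a'), s(b, b')}))
    (hcolH : ∀ p q, (G.deleteEdges {s(a, a'), s(b, b')}).Adj p q → c p ≠ c q)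
    (haa : G.Adj a a') (hbb : G.Adj b b')
    (ha : c a = k) (ha' : c a' = k) (hb : c b = l) (hb' : c b' = l) :
    Fintype.card V ≤ 2 * {e : Sym2 V | Removable G e}.ncard + 6 := by
  classical
  set R : Finset (Sym2 V) := Finset.univ.filter fun e => Removable G e with hR
  have hRcard : {e : Sym2 V | Removable G e}.ncard = R.card := by
    rw [← Set.ncard_coe_finset]
    congr 1
    ext e
    simp [hR]
  set Bk : Finset V := Finset.univ.filter fun v =>
    c v = k ∧ v ≠ a ∧ v ≠ a' ∧ ∀ w, ¬ Removable G s(v, w) with hBk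
  set Bl : Finset V := Finset.univ.filter fun v =>
    c v = l ∧ v ≠ b ∧ v ≠ b' ∧ ∀ w, ¬ Removable G s(v, w) with hBl
  have hBk1 : Bk.card ≤ 1 := by
    refine Finset.card_le_one.2 fun x hx y hy => ?_
    simp only [hBk, Finset.mem_filter, Finset.mem_univ, true_and] at hx hy
    exact eq_of_not_removable hG hkl hcard h2 hH hcolH haa hbb ha ha' hb hb' hx.1 hy.1 hx.2.1
      hx.2.2.1 hy.2.1 hy.2.2.1 hx.2.2.2 hy.2.2.2
  have hBl1 : Bl.card ≤ 1 := by
    refine Finset.card_le_one.2 fun x hx y hy => ?_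
    simp only [hBl, Finset.mem_filter, Finset.mem_univ, true_and] at hx hy
    rw [Set.pair_comm] at hH hcolH
    exact eq_of_not_removable hG hkl.symm hcard.symm (hcard ▸ h2) hH hcolH hbb haa hb hb' ha ha'
      hx.1 hy.1 hx.2.1 hx.2.2.1 hy.2.1 hy.2.2.1 hx.2.2.2 hy.2.2.2
  have hcov : (R.biUnion fun e => e.toFinset).card ≤ R.card * 2 :=
    Finset.card_biUnion_le_card_mul _ _ _ fun e _ => by
      rw [Sym2.card_toFinset]; split_ifs <;> norm_num
  have hsub : (Finset.univ : Finset V) ⊆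
      (R.biUnion fun e => e.toFinset) ∪ ({a, a', b, b'} ∪ (Bk ∪ Bl)) := by
    intro v _
    by_cases hv : ∃ w, Removable G s(v, w)
    · obtain ⟨w, hw⟩ := hv
      refine Finset.mem_union_left _ (Finset.mem_biUnion.2 ⟨s(v, w), ?_, ?_⟩)
      · simpa [hR] using hw
      · simp
    · push Not at hv
      have := fun h : c v ≠ k => colour_eq hkl h
      simp only [hBk, hBl, Finset.mem_union, Finset.mem_insert, Finset.mem_singleton,
        Finset.mem_filter, Finset.mem_univ, true_and]
      tauto
  have h4 : ({a, a', b, b'} : Finset V).card ≤ 4 := Finset.card_le_four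
  have u1 := Finset.card_le_card hsub
  have u2 := Finset.card_union_le (R.biUnion fun e => e.toFinset) ({a, a', b, b'} ∪ (Bk ∪ Bl))
  have u3 := Finset.card_union_le {a, a', b, b'} (Bk ∪ Bl)
  have u4 := Finset.card_union_le Bk Bl
  rw [Finset.card_univ] at u1
  omega

end Coloured

end NearBipartite

/-- every near-bipartite brick other than `K₄` has at least
`(n − 6)/2` removable edges. -/
theorem stmt13 [Fintype V] (G : SimpleGraph V) (hG : IsBrick G)
    (hK4 : ¬ Nonempty (G ≃g (⊤ : SimpleGraph (Fin 4))))
    (a1 b1 a2 b2 : V) (he1 : G.Adj a1 b1) (he2 : G.Adj a2 b2)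
    (hnee : s(a1, b1) ≠ s(a2, b2))
    (hnr1 : ¬ Removable G s(a1, b1)) (hnr2 : ¬ Removable G s(a2, b2))
    (hH : MatchingCovered (G.deleteEdges {s(a1, b1), s(a2, b2)}))
    (hbip : (G.deleteEdges {s(a1, b1), s(a2, b2)}).Colorable 2) :
    (Nat.card V - 6) / 2 ≤ {e : Sym2 V | Removable G e}.ncard := by
  obtain ⟨C⟩ := hbip
  let c : V → Bool := fun v => decide (C v = 0)
  have hcolH : ∀ p q, (G.deleteEdges {s(a1, b1), s(a2, b2)}).Adj p q → c p ≠ c q := by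
    intro p q hpq
    have h := C.valid hpq
    simp only [c]
    generalize C p = x at h
    generalize C q = y at h
    revert x y
    decide
  have hmono : ∀ {d p q}, G.Adj p q → c p = d → c q = d →
      (c a1 = d ∧ c b1 = d) ∨ (c a2 = d ∧ c b2 = d) := by
    intro d p q hpq hp hq
    by_cases h : s(p, q) ∈ ({s(a1, b1), s(a2, b2)} : Set (Sym2 V))
    · rw [Set.mem_insert_iff, Set.mem_singleton_iff, Sym2.eq_iff, Sym2.eq_iff] at h
      rcases h with (⟨rfl, rfl⟩ | ⟨rfl, rfl⟩) | (⟨rfl, rfl⟩ | ⟨rfl, rfl⟩)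
      exacts [Or.inl ⟨hp, hq⟩, Or.inl ⟨hq, hp⟩, Or.inr ⟨hp, hq⟩, Or.inr ⟨hq, hp⟩]
    · exact absurd (hp.trans hq.symm) (hcolH p q (deleteEdges_adj.2 ⟨hpq, h⟩))
  have htf : true ≠ false := by decide
  have hcard := (NearBipartite.card_colour_le hH htf hcolH).antisymm
    (NearBipartite.card_colour_le hH htf.symm hcolH)
  have hsum : Fintype.card V =
      Fintype.card {v // c v = true} + Fintype.card {v // c v = false} := by
    rw [← Fintype.card_congr (Equiv.sumCompl fun v => c v = true), Fintype.card_sum]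
    congr 1
    exact Fintype.card_congr (Equiv.subtypeEquivRight fun v => by simp)
  have hn := hG.1.1
  rw [Nat.card_eq_fintype_card] at hn ⊢
  have h2 : 2 ≤ Fintype.card {v // c v = true} := by omega
  obtain ⟨p, q, hpq, hp, hq⟩ := NearBipartite.exists_adj_same_colour hG.2 htf hcard h2
  obtain ⟨p', q', hpq', hp', hq'⟩ :=
    NearBipartite.exists_adj_same_colour hG.2 htf.symm hcard.symm (hcard ▸ h2)
  have hle : Fintype.card V ≤ 2 * {e : Sym2 V | Removable G e}.ncard + 6 := by
    rcases hmono hpq hp hq with ⟨f1, f2⟩ | ⟨f1, f2⟩ <;>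
      rcases hmono hpq' hp' hq' with ⟨t1, t2⟩ | ⟨t1, t2⟩
    · exact absurd (t1.symm.trans f1) htf
    · exact NearBipartite.card_le_two_mul_card_removable hG htf.symm hcard.symm (hcard ▸ h2) hH
        hcolH he1 he2 f1 f2 t1 t2
    · exact NearBipartite.card_le_two_mul_card_removable hG htf hcard h2 hH hcolH he1 he2
        t1 t2 f1 f2
    · exact absurd (t1.symm.trans f1) htf
  omega
end
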